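/- For every ψ ∈ 𝒜(I_π) it holds λ₁(I_π, 2ψ²) ≥ 2, with equality if and only if ψ(x) = tan x; in the equality case an eigenfunction is cos²x. -/

import Mathlib

/-!
Let `Φ m = 2 tan (m / 2) - m`, the integral of `tan²` over the centred interval of length `m`. The
gap condition implies that each sublevel set `{|ψ| ≤ t}` is at most as long as the one of
`tan`, namely `2 arctan t`; by the layer cake formula every set of length `m` then has `ψ²`-mass at
least `Φ m`. Hence `∫ v² d(2ψ²)` is at least the integral of `2 Φ (|{|v| > s}|) d(s²)`, and only
the distribution function of `|v|` matters. For the Dirichlet energy, a weight `g` that is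
increasing in the length of `{|v| > s}` can be inserted by `2 |v'| g |v| ≤ v'² + g² v²`; the choice
`g m = 2 tan (m / 2)` solves the Riccati equation `2 g' + 2 Φ' = 2 + g²` and gives the bound `2`.

For the equality case, `g` is perturbed to create some room: away from large superlevel sets the
constant `2` improves to `2 + ε`, while large superlevel sets pay for the loss through any strict
deficit in the length of a sublevel set of `ψ`. So `λ₁ = 2` forces every sublevel set to have the
maximal length `2 arctan t`. The gap condition between heights `s ≠ t` then bounds the displacement
of their centres to second order in `s - t`, so the centres agree; they tend to `0` as the sublevel
sets fill `I_π`, and hence `ψ = tan`.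
-/

open MeasureTheory Real Set Filter
open scoped ENNReal

noncomputable section

/-- Test class for the Dirichlet eigenvalue with measure potential on `(a,b)`:
`C¹` functions vanishing outside the open interval (a core of `H¹₀`). -/
def TestFun (a b : ℝ) (v : ℝ → ℝ) : Prop :=
  ContDiff ℝ 1 v ∧ ∀ x ∉ Ioo a b, v x = 0

/-- Rayleigh quotient for the Dirichlet eigenvalue with (nonnegative, possibly infinite)
measure potential `q` on the interval `(a,b)`. -/
def dirRQ (a b : ℝ) (q : Measure ℝ) (v : ℝ → ℝ) : ℝ≥0∞ :=
  ((∫⁻ x in Ioo a b, ENNReal.ofReal ((deriv v x) ^ 2)) +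
      ∫⁻ x in Ioo a b, ENNReal.ofReal ((v x) ^ 2) ∂q) /
    ∫⁻ x in Ioo a b, ENNReal.ofReal ((v x) ^ 2)

/-- `λ₁((a,b), q)`, the first Dirichlet eigenvalue with measure potential `q`. -/
def lam1 (a b : ℝ) (q : Measure ℝ) : ℝ≥0∞ :=
  ⨅ (v : ℝ → ℝ)
    (_ : TestFun a b v ∧ (∫⁻ x in Ioo a b, ENNReal.ofReal ((v x) ^ 2)) ≠ 0),
    dirRQ a b q v

/-- The class `𝒜(I_π)`: an increasing function `psi` with finiteness domain `dom ⊆ I_π`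
(an interval), satisfying the improved-monotonicity gap condition, together with the
measure `nu` representing its distributional derivative `ψ'` on `dom`. -/
structure PsiA where
  dom : Set ℝ
  domSub : dom ⊆ Ioo (-(π / 2)) (π / 2)
  domConn : dom.OrdConnected
  psi : ℝ → ℝ
  mono : MonotoneOn psi dom
  gap : ∀ ⦃x⦄, x ∈ dom → ∀ ⦃y⦄, y ∈ dom → x < y →
    2 * tan ((y - x) / 2) ≤ psi y - psi x
  nu : Measure ℝ
  nu_eq : ∀ ⦃x⦄, x ∈ dom → ∀ ⦃y⦄, y ∈ dom → x ≤ y →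
    nu (Ioc x y) = ENNReal.ofReal (psi y - psi x)

/-- The measure `ψ'`, extended by `+∞` on `I_π \ dom ψ`. -/
def PsiA.derivM (P : PsiA) : Measure ℝ :=
  P.nu.restrict P.dom + (∞ : ℝ≥0∞) • volume.restrict (Ioo (-(π / 2)) (π / 2) \ P.dom)

/-- The measure `ψ² dx`, extended by `+∞` on `I_π \ dom ψ`. -/
def PsiA.sqM (P : PsiA) : Measure ℝ :=
  (volume.restrict P.dom).withDensity (fun x => ENNReal.ofReal ((P.psi x) ^ 2)) +
    (∞ : ℝ≥0∞) • volume.restrict (Ioo (-(π / 2)) (π / 2) \ P.dom)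

/-- The measure `q = ψ' + ψ²`, extended by `+∞` on `I_π \ dom ψ`. -/
def PsiA.qM (P : PsiA) : Measure ℝ :=
  P.nu.restrict P.dom +
    (volume.restrict P.dom).withDensity (fun x => ENNReal.ofReal ((P.psi x) ^ 2)) +
    (∞ : ℝ≥0∞) • volume.restrict (Ioo (-(π / 2)) (π / 2) \ P.dom)

/-- The function `cos² x` on `I_π`, extended by zero. -/
def cosSq : ℝ → ℝ := fun x => if x ∈ Ioo (-(π / 2)) (π / 2) then cos x ^ 2 else 0

/-- The measure with density `1 + 2 tan² x` on `I_π`. -/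
def tanWeight : Measure ℝ :=
  (volume.restrict (Ioo (-(π / 2)) (π / 2))).withDensity
    fun x => ENNReal.ofReal (1 + 2 * tan x ^ 2)

/-! ### Distribution functions and rearrangement -/

section Rearrangement

variable {α : Type*} [MeasurableSpace α] {μ : Measure α} {u : α → ℝ}

lemma lintegral_sq_eq_lintegral_meas_lt_abs {f : α → ℝ} (hf : AEMeasurable f μ) :
    ∫⁻ x, ENNReal.ofReal (f x ^ 2) ∂μ =
      ∫⁻ s in Ioi (0 : ℝ), μ {x | s < |f x|} * ENNReal.ofReal (2 * s) := by
  have h := lintegral_comp_eq_lintegral_meas_lt_mul (f := fun x => |f x|) (g := fun s => 2 * s) μ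
    (Eventually.of_forall fun x => abs_nonneg _) hf.abs
    (fun t _ => (by fun_prop : Continuous fun s : ℝ => 2 * s).intervalIntegrable _ _)
    ((ae_restrict_mem measurableSet_Ioi).mono fun t (ht : 0 < t) => by positivity)
  rw [← h]
  refine lintegral_congr fun x => ?_
  rw [intervalIntegral.integral_const_mul, integral_id, ← sq_abs]
  congr 1
  ring

/-- The distribution function `s ↦ μ {u > s}` of `u`, with real values (for finite `μ`). -/
def distribFun (μ : Measure α) (u : α → ℝ) (s : ℝ) : ℝ := μ.real {x | s < u x}

lemma distribFun_nonneg (s : ℝ) : 0 ≤ distribFun μ u s := measureReal_nonneg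

lemma ofReal_distribFun [IsFiniteMeasure μ] (s : ℝ) :
    ENNReal.ofReal (distribFun μ u s) = μ {x | s < u x} := ofReal_measureReal

lemma distribFun_antitone [IsFiniteMeasure μ] : Antitone (distribFun μ u) :=
  fun _ _ hst => measureReal_mono fun _ hx => hst.trans_lt hx

lemma measurable_distribFun [IsFiniteMeasure μ] : Measurable (distribFun μ u) :=
  distribFun_antitone.measurable

lemma distribFun_eq_zero {s : ℝ} (h : ∀ x, u x ≤ s) : distribFun μ u s = 0 := by
  simp [distribFun, fun x => (h x).not_gt]

lemma exists_distribFun_lt [IsFiniteMeasure μ] (hu : Measurable u) {ρ : ℝ} (hρ : 0 < ρ) :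
    ∃ t, distribFun μ u t < ρ := by
  have hempty : ⋂ t : ℝ, {x | t < u x} = ∅ :=
    eq_empty_of_forall_notMem fun x hx => lt_irrefl (u x) (mem_iInter.1 hx (u x))
  have hlim := tendsto_measure_iInter_atTop (μ := μ) (s := fun t : ℝ => {x | t < u x})
    (fun t => (measurableSet_lt measurable_const hu).nullMeasurableSet)
    (fun _ _ hst _ hx => hst.trans_lt hx) ⟨0, measure_ne_top μ _⟩
  rw [hempty, measure_empty] at hlim
  obtain ⟨t, ht⟩ := (hlim.eventually (gt_mem_nhds (ENNReal.ofReal_pos.2 hρ))).exists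
  exact ⟨t, (ENNReal.ofReal_lt_ofReal_iff hρ).1 (by rwa [ofReal_distribFun])⟩

lemma le_measure_ge_of_forall_lt [IsFiniteMeasure μ] (hu : Measurable u) {τ : ℝ} {c : ℝ≥0∞}
    (h : ∀ t < τ, c ≤ μ {x | t < u x}) : c ≤ μ {x | τ ≤ u x} := by
  have hInter : ⋂ r > -τ, {x | -r < u x} = {x | τ ≤ u x} := by
    ext x
    simp only [mem_iInter, mem_ofPred_eq]
    refine ⟨fun hx => le_of_forall_lt fun t ht => ?_, fun hx r hr => by linarith⟩
    simpa using hx (-t) (neg_lt_neg ht)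
  have hlim := tendsto_measure_biInter_gt (μ := μ) (s := fun r : ℝ => {x | -r < u x}) (a := -τ)
    (fun r _ => (measurableSet_lt measurable_const hu).nullMeasurableSet)
    (fun i j _ hij x (hx : -i < u x) => (neg_le_neg hij).trans_lt hx)
    ⟨-τ + 1, by linarith, measure_ne_top μ _⟩
  rw [hInter] at hlim
  exact ge_of_tendsto hlim (eventually_mem_nhdsWithin.mono fun r hr => h _ (neg_lt.1 hr))

lemma ofReal_le_measure_distribFun_lt [IsFiniteMeasure μ] (hu : Measurable u) {s ρ : ℝ}
    (hρ : 0 < ρ) (hs : ρ ≤ distribFun μ u s) :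
    ENNReal.ofReal ρ ≤ μ {x | s < u x ∧ distribFun μ u (u x) < ρ} := by
  set S := {t | distribFun μ u t < ρ}
  have hlt : ∀ t ∈ S, s < t := fun t ht =>
    lt_of_not_ge fun hts => (hs.trans (distribFun_antitone hts)).not_gt ht
  have hbdd : BddBelow S := ⟨s, fun t ht => (hlt t ht).le⟩
  have hne : S.Nonempty := exists_distribFun_lt hu hρ
  by_cases hτ : sInf S ∈ S
  · have hge : ENNReal.ofReal ρ ≤ μ {x | sInf S ≤ u x} :=
      le_measure_ge_of_forall_lt hu fun t ht => by
        rw [← ofReal_distribFun]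
        have htS : t ∉ S := notMem_of_lt_csInf ht hbdd
        exact ENNReal.ofReal_le_ofReal (not_lt.1 htS)
    exact hge.trans <| measure_mono fun x hx =>
      ⟨(hlt _ hτ).trans_le hx, (distribFun_antitone hx).trans_lt hτ⟩
  · have hge : ENNReal.ofReal ρ ≤ μ {x | sInf S < u x} := by
      rw [← ofReal_distribFun]
      exact ENNReal.ofReal_le_ofReal (not_lt.1 hτ)
    refine hge.trans <| measure_mono fun x hx => ?_
    obtain ⟨t, htS, htx⟩ := exists_lt_of_csInf_lt hne hx
    exact ⟨(hlt t htS).trans htx, (distribFun_antitone htx.le).trans_lt htS⟩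

lemma measure_le_distribFun_le [IsFiniteMeasure μ] (hu : Measurable u) (s : ℝ) {ρ : ℝ}
    (hρ : 0 ≤ ρ) :
    μ {x | s < u x ∧ ρ ≤ distribFun μ u (u x)} ≤ ENNReal.ofReal (distribFun μ u s - ρ) := by
  have hTu : Measurable fun x => distribFun μ u (u x) := measurable_distribFun.comp hu
  rcases hρ.eq_or_lt with rfl | hρ
  · rw [sub_zero, ofReal_distribFun]
    exact measure_mono fun x hx => hx.1
  rcases lt_or_ge (distribFun μ u s) ρ with hs | hs
  · refine (measure_mono_null (fun x hx => ?_) measure_empty).trans_le zero_le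
    exact (hs.trans_le hx.2).not_ge (distribFun_antitone hx.1.le)
  rw [ENNReal.ofReal_sub _ hρ.le, ofReal_distribFun]
  refine ENNReal.le_sub_of_add_le_right ENNReal.ofReal_ne_top ?_
  calc μ {x | s < u x ∧ ρ ≤ distribFun μ u (u x)} + ENNReal.ofReal ρ
      ≤ μ {x | s < u x ∧ ρ ≤ distribFun μ u (u x)} +
          μ {x | s < u x ∧ distribFun μ u (u x) < ρ} := by
        gcongr
        exact ofReal_le_measure_distribFun_lt hu hρ hs
    _ = μ ({x | s < u x ∧ ρ ≤ distribFun μ u (u x)} ∪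
          {x | s < u x ∧ distribFun μ u (u x) < ρ}) :=
        (measure_union (disjoint_left.2 fun x hx hx' => hx'.2.not_ge hx.2)
          ((measurableSet_lt measurable_const hu).inter
            (measurableSet_lt hTu measurable_const))).symm
    _ ≤ μ {x | s < u x} := measure_mono (by rintro x (hx | hx) <;> exact hx.1)

lemma setLIntegral_comp_distribFun_le [IsFiniteMeasure μ] (hu : Measurable u) {F : ℝ → ℝ}
    (hFm : Measurable F) (hF0 : 0 ≤ F) {c s : ℝ} (hF : MonotoneOn F (Ico 0 c))
    (hs : distribFun μ u s < c) :
    ∫⁻ x in {x | s < u x}, ENNReal.ofReal (F (distribFun μ u (u x))) ∂μ ≤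
      ∫⁻ y in Ioo 0 (distribFun μ u s), ENNReal.ofReal (F y) := by
  have hFTu : Measurable fun x => F (distribFun μ u (u x)) :=
    hFm.comp (measurable_distribFun.comp hu)
  rw [lintegral_eq_lintegral_meas_lt _
      (ae_of_all _ fun x => hF0 (distribFun μ u (u x))) hFTu.aemeasurable,
    lintegral_eq_lintegral_meas_lt _ (ae_of_all _ hF0) hFm.aemeasurable]
  refine lintegral_mono fun τ => ?_
  rw [Measure.restrict_apply (measurableSet_lt measurable_const hFTu),
    Measure.restrict_apply (measurableSet_lt measurable_const hFm)]
  set Y := {y | τ < F y} ∩ Icc 0 (distribFun μ u s)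
  have hmem : ∀ x ∈ {x | τ < F (distribFun μ u (u x))} ∩ {x | s < u x},
      distribFun μ u (u x) ∈ Y := fun x hx =>
    ⟨hx.1, distribFun_nonneg _, distribFun_antitone (le_of_lt hx.2)⟩
  rcases Y.eq_empty_or_nonempty with hY | hY
  · have hempty : {x | τ < F (distribFun μ u (u x))} ∩ {x | s < u x} = ∅ :=
      eq_empty_of_forall_notMem fun x hx => (hY.subset (hmem x hx)).elim
    simp [hempty]
  have hbdd : BddBelow Y := ⟨0, fun y hy => hy.2.1⟩
  have hInf : 0 ≤ sInf Y := le_csInf hY fun y hy => hy.2.1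
  calc μ ({x | τ < F (distribFun μ u (u x))} ∩ {x | s < u x})
      ≤ μ {x | s < u x ∧ sInf Y ≤ distribFun μ u (u x)} :=
        measure_mono fun x hx => ⟨hx.2, csInf_le hbdd (hmem x hx)⟩
    _ ≤ ENNReal.ofReal (distribFun μ u s - sInf Y) := measure_le_distribFun_le hu s hInf
    _ = volume (Ioo (sInf Y) (distribFun μ u s)) := Real.volume_Ioo.symm
    _ ≤ volume ({y | τ < F y} ∩ Ioo 0 (distribFun μ u s)) := measure_mono fun y hy => by
        obtain ⟨z, hz, hzy⟩ := exists_lt_of_csInf_lt hY hy.1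
        have hy0 : 0 < y := hInf.trans_lt hy.1
        exact ⟨hz.1.trans_le
          (hF ⟨hz.2.1, hz.2.2.trans_lt hs⟩ ⟨hy0.le, hy.2.trans hs⟩ hzy.le), hy0, hy.2⟩

end Rearrangement

lemma setLIntegral_image_le {v v' : ℝ → ℝ} {T : Set ℝ} (hT : MeasurableSet T) (hvm : Measurable v)
    (hv'm : Measurable v') (hv : ∀ x ∈ T, HasDerivWithinAt v (v' x) T x) {h : ℝ → ℝ≥0∞}
    (hh : Measurable h) :
    ∫⁻ s in v '' T, h s ≤ ∫⁻ x in T, h (v x) * ENNReal.ofReal |v' x| := by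
  have hdm : Measurable fun x => ENNReal.ofReal |v' x| := hv'm.abs.ennreal_ofReal
  have hle : volume.restrict (v '' T) ≤
      ((volume.restrict T).withDensity fun x => ENNReal.ofReal |v' x|).map v := by
    refine Measure.le_iff.2 fun A hA => ?_
    have hvA : MeasurableSet (v ⁻¹' A) := hvm hA
    rw [Measure.restrict_apply hA, Measure.map_apply hvm hA, withDensity_apply _ hvA,
      Measure.restrict_restrict hvA, ← image_preimage_inter]
    simpa using addHaar_image_le_lintegral_abs_det_fderiv volume (hvA.inter hT)
      fun x hx => ((hv x hx.2).mono inter_subset_right).hasFDerivWithinAt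
  calc ∫⁻ s in v '' T, h s
      ≤ ∫⁻ s, h s ∂((volume.restrict T).withDensity fun x => ENNReal.ofReal |v' x|).map v :=
        lintegral_mono' hle le_rfl
    _ = ∫⁻ x in T, h (v x) * ENNReal.ofReal |v' x| := by
        rw [lintegral_map hh hvm]
        refine (lintegral_withDensity_eq_lintegral_mul _ hdm (hh.comp hvm)).trans ?_
        exact lintegral_congr fun x => mul_comm _ _

namespace TestFun

variable {a b : ℝ} {v : ℝ → ℝ}

lemma neg (hv : TestFun a b v) : TestFun a b fun x => -v x :=
  ⟨hv.1.neg, fun x hx => by simp [hv.2 x hx]⟩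

lemma measurable (hv : TestFun a b v) : Measurable v := hv.1.continuous.measurable

lemma measurable_deriv (hv : TestFun a b v) : Measurable (deriv v) :=
  (hv.1.continuous_deriv le_rfl).measurable

lemma lt_abs_subset (hv : TestFun a b v) {s : ℝ} (hs : 0 ≤ s) : {x | s < |v x|} ⊆ Ioo a b :=
  fun x (hx : s < |v x|) => not_not.1 fun hxI => by
    rw [hv.2 x hxI, abs_zero] at hx
    exact hx.not_ge hs

lemma two_mul_setLIntegral_le_of_pos (hv : TestFun a b v) {m : ℝ} (hm : m ∈ Icc a b)
    {h : ℝ → ℝ≥0∞} (hh : Measurable h) :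
    2 * ∫⁻ s in Ioo 0 (v m), h s ≤ ∫⁻ x in Ioo a b, h |v x| * ENNReal.ofReal |deriv v x| := by
  have hvc : Continuous v := hv.1.continuous
  have hva : v a = 0 := hv.2 a (by simp)
  have hvb : v b = 0 := hv.2 b (by simp)
  have side : ∀ T, MeasurableSet T → Ioo 0 (v m) ⊆ v '' T →
      ∫⁻ s in Ioo 0 (v m), h s ≤ ∫⁻ x in T, h |v x| * ENNReal.ofReal |deriv v x| := by
    intro T hT hsub
    have hTpos : MeasurableSet (v ⁻¹' Ioi 0 ∩ T) := (hv.measurable measurableSet_Ioi).inter hT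
    calc ∫⁻ s in Ioo 0 (v m), h s ≤ ∫⁻ s in v '' (v ⁻¹' Ioi 0 ∩ T), h s :=
          lintegral_mono_set (image_preimage_inter v T _ ▸ fun s hs => ⟨hs.1, hsub hs⟩)
      _ ≤ ∫⁻ x in v ⁻¹' Ioi 0 ∩ T, h (v x) * ENNReal.ofReal |deriv v x| :=
          setLIntegral_image_le hTpos hv.measurable hv.measurable_deriv
            (fun x _ => (hv.1.differentiable one_ne_zero x).hasDerivAt.hasDerivWithinAt) hh
      _ = ∫⁻ x in v ⁻¹' Ioi 0 ∩ T, h |v x| * ENNReal.ofReal |deriv v x| :=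
          setLIntegral_congr_fun hTpos fun x hx => by
            simp only [abs_of_pos (show 0 < v x from hx.1)]
      _ ≤ ∫⁻ x in T, h |v x| * ENNReal.ofReal |deriv v x| := lintegral_mono_set inter_subset_right
  have left := side (Ioo a m) measurableSet_Ioo <| by
    simpa [hva] using intermediate_value_Ioo hm.1 hvc.continuousOn
  have right := side (Ioo m b) measurableSet_Ioo <| by
    simpa [hvb] using intermediate_value_Ioo' hm.2 hvc.continuousOn
  have hdisj : Disjoint (Ioo a m) (Ioo m b) :=
    disjoint_left.2 fun x hx hx' => lt_asymm hx.2 hx'.1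
  rw [two_mul]
  refine (add_le_add left right).trans ?_
  rw [← lintegral_union measurableSet_Ioo hdisj]
  exact lintegral_mono_set
    (union_subset (Ioo_subset_Ioo_right hm.2) (Ioo_subset_Ioo_left hm.1))

lemma two_mul_setLIntegral_le (hv : TestFun a b v) {m : ℝ} (hm : m ∈ Icc a b)
    {h : ℝ → ℝ≥0∞} (hh : Measurable h) :
    2 * ∫⁻ s in Ioo 0 |v m|, h s ≤ ∫⁻ x in Ioo a b, h |v x| * ENNReal.ofReal |deriv v x| := by
  rcases abs_choice (v m) with hm' | hm' <;> rw [hm']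
  · exact hv.two_mul_setLIntegral_le_of_pos hm hh
  · simpa using hv.neg.two_mul_setLIntegral_le_of_pos hm hh

lemma four_mul_setLIntegral_le (hv : TestFun a b v) {m : ℝ} (hm : m ∈ Icc a b)
    {H : ℝ → ℝ} (hH : Measurable H) :
    4 * ∫⁻ s in Ioo 0 |v m|, ENNReal.ofReal (H s) ≤
      (∫⁻ x in Ioo a b, ENNReal.ofReal (deriv v x ^ 2)) +
        ∫⁻ x in Ioo a b, ENNReal.ofReal (H |v x| ^ 2) := by
  have amgm : ∀ x, 2 * (ENNReal.ofReal (H |v x|) * ENNReal.ofReal |deriv v x|) ≤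
      ENNReal.ofReal (deriv v x ^ 2) + ENNReal.ofReal (H |v x| ^ 2) := fun x => by
    rw [← ENNReal.ofReal_mul' (abs_nonneg _), ← ENNReal.ofReal_ofNat,
      ← ENNReal.ofReal_mul zero_le_two, ← ENNReal.ofReal_add (sq_nonneg _) (sq_nonneg _),
      ← sq_abs (deriv v x)]
    exact ENNReal.ofReal_le_ofReal (by linarith [two_mul_le_add_sq (H |v x|) |deriv v x|])
  calc 4 * ∫⁻ s in Ioo 0 |v m|, ENNReal.ofReal (H s)
      = 2 * (2 * ∫⁻ s in Ioo 0 |v m|, ENNReal.ofReal (H s)) := by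
        rw [← mul_assoc]
        norm_num
    _ ≤ 2 * ∫⁻ x in Ioo a b, ENNReal.ofReal (H |v x|) * ENNReal.ofReal |deriv v x| := by
        gcongr
        exact hv.two_mul_setLIntegral_le hm hH.ennreal_ofReal
    _ ≤ ∫⁻ x in Ioo a b, (ENNReal.ofReal (deriv v x ^ 2) + ENNReal.ofReal (H |v x| ^ 2)) := by
        rw [← lintegral_const_mul' _ _ ENNReal.ofNat_ne_top]
        exact lintegral_mono amgm
    _ = _ := lintegral_add_left (hv.measurable_deriv.pow_const 2).ennreal_ofReal _

end TestFun

/-! ### Layer integrals -/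

/-- The distribution function of `|v|` on `(a, b)`: the length of `{x ∈ (a, b) | s < |v x|}`. -/
def absDistrib (a b : ℝ) (v : ℝ → ℝ) : ℝ → ℝ :=
  distribFun (volume.restrict (Ioo a b)) fun x => |v x|

/-- The integral `∫₀^∞ A(|{|v| > s}|) 2 s ds`. By the layer cake formula it is `∫ v²` for
`A m = m`, and the quadratic form of a potential that charges sets of length `m` with `A m`. -/
def layerIntegral (a b : ℝ) (v : ℝ → ℝ) (A : ℝ → ℝ≥0∞) : ℝ≥0∞ :=
  ∫⁻ s in Ioi (0 : ℝ), A (absDistrib a b v s) * ENNReal.ofReal (2 * s)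

lemma measurable_absDistrib (a b : ℝ) (v : ℝ → ℝ) : Measurable (absDistrib a b v) :=
  measurable_distribFun

lemma layerIntegral_add (a b : ℝ) (v : ℝ → ℝ) {A : ℝ → ℝ≥0∞} (hA : Measurable A)
    (B : ℝ → ℝ≥0∞) :
    layerIntegral a b v (fun m => A m + B m) = layerIntegral a b v A + layerIntegral a b v B := by
  have hmeas : Measurable fun s => A (absDistrib a b v s) * ENNReal.ofReal (2 * s) :=
    (hA.comp (measurable_absDistrib a b v)).mul (by fun_prop)
  simp only [layerIntegral, add_mul]
  exact lintegral_add_left hmeas _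

lemma layerIntegral_const_mul (a b : ℝ) (v : ℝ → ℝ) (c : ℝ≥0∞) {A : ℝ → ℝ≥0∞}
    (hA : Measurable A) : layerIntegral a b v (fun m => c * A m) = c * layerIntegral a b v A := by
  simp only [layerIntegral, mul_assoc]
  exact lintegral_const_mul _ ((hA.comp (measurable_absDistrib a b v)).mul (by fun_prop))

namespace TestFun

variable {a b : ℝ} {v : ℝ → ℝ}

lemma absDistrib_mem_Ico (hab : a < b) (hv : TestFun a b v) {s : ℝ} (hs : 0 < s) :
    absDistrib a b v s ∈ Ico 0 (b - a) := by
  refine ⟨distribFun_nonneg s, ?_⟩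
  set μ : Measure ℝ := volume.restrict (Ioo a b) with hμ
  have hnear : ∀ᶠ x in nhds a, |v x| < s :=
    hv.1.continuous.abs.continuousAt.eventually_lt_const (by simpa [hv.2 a])
  have hopen : IsOpen {x | |v x| < s} := isOpen_lt hv.1.continuous.abs continuous_const
  have hpos : 0 < μ {x | |v x| < s} := by
    rw [hμ, Measure.restrict_apply hopen.measurableSet]
    exact (hopen.inter isOpen_Ioo).measure_pos volume
      ((hnear.filter_mono nhdsWithin_le_nhds).and (Ioo_mem_nhdsGT hab)).exists
  calc absDistrib a b v s < μ.real {x | s < |v x|} + μ.real {x | |v x| < s} :=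
        lt_add_of_pos_right _ (ENNReal.toReal_pos hpos.ne' (measure_ne_top _ _))
    _ = μ.real ({x | s < |v x|} ∪ {x | |v x| < s}) :=
        (measureReal_union (disjoint_left.2 fun x (hx : s < |v x|) => hx.not_gt)
          hopen.measurableSet).symm
    _ ≤ μ.real univ := measureReal_mono (subset_univ _)
    _ = b - a := by simp [hμ, hab.le]

lemma layerIntegral_mono (hab : a < b) (hv : TestFun a b v) {A B : ℝ → ℝ≥0∞}
    (hAB : ∀ m ∈ Ico 0 (b - a), A m ≤ B m) : layerIntegral a b v A ≤ layerIntegral a b v B :=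
  setLIntegral_mono' measurableSet_Ioi fun _ hs => by
    gcongr
    exact hAB _ (hv.absDistrib_mem_Ico hab hs)

lemma lintegral_sq_eq_layerIntegral (hv : TestFun a b v) :
    ∫⁻ x in Ioo a b, ENNReal.ofReal (v x ^ 2) = layerIntegral a b v ENNReal.ofReal := by
  rw [lintegral_sq_eq_lintegral_meas_lt_abs hv.measurable.aemeasurable]
  simp only [layerIntegral, absDistrib, ofReal_distribFun]

lemma layerIntegral_le_lintegral_sq (hab : a < b) (hv : TestFun a b v) {q : Measure ℝ}
    {A : ℝ → ℝ≥0∞} (hq : ∀ m ∈ Ico 0 (b - a), ∀ E, MeasurableSet E → E ⊆ Ioo a b →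
      volume E = ENNReal.ofReal m → A m ≤ q E) :
    layerIntegral a b v A ≤ ∫⁻ x in Ioo a b, ENNReal.ofReal (v x ^ 2) ∂q := by
  rw [lintegral_sq_eq_lintegral_meas_lt_abs hv.measurable.aemeasurable]
  refine setLIntegral_mono' measurableSet_Ioi fun s (hs : 0 < s) => ?_
  have hE : MeasurableSet {x | s < |v x|} := measurableSet_lt measurable_const hv.measurable.abs
  have hsub := hv.lt_abs_subset hs.le
  gcongr
  rw [Measure.restrict_apply hE, inter_eq_left.2 hsub]
  refine hq _ (hv.absDistrib_mem_Ico hab hs) _ hE hsub ?_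
  rw [absDistrib, ofReal_distribFun, Measure.restrict_apply hE, inter_eq_left.2 hsub]

lemma lintegral_sq_mul_comp_absDistrib_le (hab : a < b) (hv : TestFun a b v) {F : ℝ → ℝ}
    (hFm : Measurable F) (hF0 : 0 ≤ F) (hF : MonotoneOn F (Ico 0 (b - a))) :
    ∫⁻ x in Ioo a b, ENNReal.ofReal (v x ^ 2 * F (absDistrib a b v |v x|)) ≤
      layerIntegral a b v fun m => ∫⁻ y in Ioo 0 m, ENNReal.ofReal (F y) := by
  have hdens : Measurable fun x => ENNReal.ofReal (F (absDistrib a b v |v x|)) :=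
    (hFm.comp ((measurable_absDistrib a b v).comp hv.measurable.abs)).ennreal_ofReal
  calc ∫⁻ x in Ioo a b, ENNReal.ofReal (v x ^ 2 * F (absDistrib a b v |v x|))
      = ∫⁻ x, ENNReal.ofReal (v x ^ 2) ∂((volume.restrict (Ioo a b)).withDensity
          fun x => ENNReal.ofReal (F (absDistrib a b v |v x|))) := by
        rw [lintegral_withDensity_eq_lintegral_mul _ hdens
          (hv.measurable.pow_const 2).ennreal_ofReal]
        refine lintegral_congr fun x => ?_
        rw [Pi.mul_apply, mul_comm (v x ^ 2), ENNReal.ofReal_mul (hF0 _)]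
    _ ≤ layerIntegral a b v fun m => ∫⁻ y in Ioo 0 m, ENNReal.ofReal (F y) := by
        rw [lintegral_sq_eq_lintegral_meas_lt_abs hv.measurable.aemeasurable]
        refine setLIntegral_mono' measurableSet_Ioi fun s hs => ?_
        gcongr
        rw [withDensity_apply _ (measurableSet_lt measurable_const hv.measurable.abs)]
        exact setLIntegral_comp_distribFun_le hv.measurable.abs hFm hF0 hF
          (hv.absDistrib_mem_Ico hab hs).2

lemma exists_abs_le (hab : a < b) (hv : TestFun a b v) : ∃ m ∈ Icc a b, ∀ x, |v x| ≤ |v m| := by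
  obtain ⟨m, hm, hmax⟩ := isCompact_Icc.exists_isMaxOn (nonempty_Icc.2 hab.le)
    hv.1.continuous.abs.continuousOn
  refine ⟨m, hm, fun x => ?_⟩
  by_cases hx : x ∈ Ioo a b
  · exact hmax (Ioo_subset_Icc_self hx)
  · rw [hv.2 x hx, abs_zero]
    exact abs_nonneg _

lemma lintegral_sq_ne_top (hab : a < b) (hv : TestFun a b v) :
    ∫⁻ x in Ioo a b, ENNReal.ofReal (v x ^ 2) ≠ ∞ := by
  obtain ⟨m, -, hmax⟩ := hv.exists_abs_le hab
  refine ne_top_of_le_ne_top (b := ENNReal.ofReal (v m ^ 2) * volume (Ioo a b)) ?_ ?_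
  · exact ENNReal.mul_ne_top ENNReal.ofReal_ne_top (by simp)
  · rw [← setLIntegral_const]
    exact lintegral_mono fun x => ENNReal.ofReal_le_ofReal (sq_le_sq.2 (hmax x))

lemma layerIntegral_two_mul_le (hab : a < b) (hv : TestFun a b v) {g : ℝ → ℝ}
    (hgm : Measurable g) (hg : MonotoneOn g (Ico 0 (b - a))) (hg0 : g 0 = 0) :
    layerIntegral a b v (fun m => ENNReal.ofReal (2 * g m)) ≤
      (∫⁻ x in Ioo a b, ENNReal.ofReal (deriv v x ^ 2)) +
        layerIntegral a b v fun m => ∫⁻ y in Ioo 0 m, ENNReal.ofReal (g y ^ 2) := by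
  obtain ⟨m, hm, hmax⟩ := hv.exists_abs_le hab
  have hgnn : ∀ y ∈ Ico 0 (b - a), 0 ≤ g y := fun y hy =>
    hg0 ▸ hg ⟨le_rfl, sub_pos.2 hab⟩ hy hy.1
  set H : ℝ → ℝ := fun s => s * g (absDistrib a b v s) with hH
  have hHm : Measurable H := measurable_id.mul (hgm.comp (measurable_absDistrib a b v))
  have hHzero : ∀ s, |v m| ≤ s → H s = 0 := fun s hs => by
    simp [hH, absDistrib, distribFun_eq_zero fun x => (hmax x).trans hs, hg0]
  calc layerIntegral a b v (fun m => ENNReal.ofReal (2 * g m))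
      = 4 * ∫⁻ s in Ioi (0 : ℝ), ENNReal.ofReal (H s) := by
        rw [layerIntegral, ← lintegral_const_mul' _ _ ENNReal.ofNat_ne_top]
        refine setLIntegral_congr_fun measurableSet_Ioi fun s (hs : 0 < s) => ?_
        simp only [hH]
        rw [← ENNReal.ofReal_mul' (by positivity), ← ENNReal.ofReal_ofNat,
          ← ENNReal.ofReal_mul (by norm_num)]
        congr 1
        ring
    _ ≤ 4 * ((∫⁻ s in Ioo 0 |v m|, ENNReal.ofReal (H s)) +
          ∫⁻ s in Ici |v m|, ENNReal.ofReal (H s)) := by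
        gcongr
        exact (lintegral_mono_set fun s (hs : 0 < s) =>
          (lt_or_ge s |v m|).imp_left (And.intro hs)).trans (lintegral_union_le _ _ _)
    _ = 4 * ∫⁻ s in Ioo 0 |v m|, ENNReal.ofReal (H s) := by
        rw [setLIntegral_eq_zero measurableSet_Ici fun s hs => by simp [hHzero s hs], add_zero]
    _ ≤ (∫⁻ x in Ioo a b, ENNReal.ofReal (deriv v x ^ 2)) +
          ∫⁻ x in Ioo a b, ENNReal.ofReal (H |v x| ^ 2) := hv.four_mul_setLIntegral_le hm hHm
    _ ≤ _ := by
        gcongr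
        simp only [hH, mul_pow, sq_abs]
        exact hv.lintegral_sq_mul_comp_absDistrib_le hab (hgm.pow_const 2)
          (fun y => sq_nonneg _) fun x hx y hy hxy =>
            pow_le_pow_left₀ (hgnn x hx) (hg hx hy hxy) 2

lemma layerIntegral_le_add_of_le (hab : a < b) (hv : TestFun a b v) {g : ℝ → ℝ}
    (hgm : Measurable g) (hg : MonotoneOn g (Ico 0 (b - a))) (hg0 : g 0 = 0) {A B : ℝ → ℝ≥0∞}
    (hAB : ∀ m ∈ Ico 0 (b - a), A m + ∫⁻ y in Ioo 0 m, ENNReal.ofReal (g y ^ 2) ≤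
      ENNReal.ofReal (2 * g m) + B m)
    (hfin : layerIntegral a b v (fun m => ∫⁻ y in Ioo 0 m, ENNReal.ofReal (g y ^ 2)) ≠ ∞) :
    layerIntegral a b v A ≤
      (∫⁻ x in Ioo a b, ENNReal.ofReal (deriv v x ^ 2)) + layerIntegral a b v B := by
  set G : ℝ → ℝ≥0∞ := fun m => ∫⁻ y in Ioo 0 m, ENNReal.ofReal (g y ^ 2)
  have hGmono : Monotone G := fun m m' h => lintegral_mono_set (Ioo_subset_Ioo_right h)
  refine (ENNReal.add_le_add_iff_right hfin).1 ?_
  calc layerIntegral a b v A + layerIntegral a b v G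
      = layerIntegral a b v fun m => A m + G m := by
        simp only [add_comm _ (layerIntegral a b v G), add_comm _ (G _),
          layerIntegral_add a b v hGmono.measurable]
    _ ≤ layerIntegral a b v fun m => ENNReal.ofReal (2 * g m) + B m :=
        hv.layerIntegral_mono hab hAB
    _ = layerIntegral a b v (fun m => ENNReal.ofReal (2 * g m)) + layerIntegral a b v B :=
        layerIntegral_add a b v (hgm.const_mul 2).ennreal_ofReal B
    _ ≤ (∫⁻ x in Ioo a b, ENNReal.ofReal (deriv v x ^ 2)) + layerIntegral a b v G +
          layerIntegral a b v B := by
        gcongr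
        exact hv.layerIntegral_two_mul_le hab hgm hg hg0
    _ = _ := by ring

end TestFun

lemma le_lam1 {a b : ℝ} (hab : a < b) {q : Measure ℝ} {L : ℝ≥0∞}
    (h : ∀ v, TestFun a b v → L * ∫⁻ x in Ioo a b, ENNReal.ofReal (v x ^ 2) ≤
      (∫⁻ x in Ioo a b, ENNReal.ofReal (deriv v x ^ 2)) +
        ∫⁻ x in Ioo a b, ENNReal.ofReal (v x ^ 2) ∂q) :
    L ≤ lam1 a b q :=
  le_iInf₂ fun v hv => (ENNReal.le_div_iff_mul_le (Or.inl hv.2)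
    (Or.inl (hv.1.lintegral_sq_ne_top hab))).2 (h v hv.1)

/-! ### The comparison weight -/

lemma lintegral_ofReal_eq_sub_of_hasDerivAt {U U' : ℝ → ℝ} {a b : ℝ} (hab : a ≤ b)
    (hcont : ContinuousOn U (Icc a b)) (hderiv : ∀ x ∈ Ioo a b, HasDerivAt U (U' x) x)
    (hnonneg : ∀ x ∈ Ioo a b, 0 ≤ U' x) :
    ∫⁻ x in Ioo a b, ENNReal.ofReal (U' x) = ENNReal.ofReal (U b - U a) := by
  have hint : IntegrableOn U' (Ioc a b) :=
    intervalIntegral.integrableOn_deriv_of_nonneg hcont hderiv hnonneg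
  rw [← intervalIntegral.integral_eq_sub_of_hasDerivAt_of_le hab hcont hderiv
      ((intervalIntegrable_iff_integrableOn_Ioc_of_le hab).2 hint),
    intervalIntegral.integral_of_le hab, integral_Ioc_eq_integral_Ioo,
    ofReal_integral_eq_lintegral_ofReal (hint.mono_set Ioo_subset_Ioc_self)
      ((ae_restrict_mem measurableSet_Ioo).mono hnonneg)]

lemma hasDerivAt_tan_half {y : ℝ} (hy : y ∈ Ioo (-π) π) :
    HasDerivAt (fun y => tan (y / 2)) ((1 + tan (y / 2) ^ 2) / 2) y := by
  have hcos : cos (y / 2) ≠ 0 :=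
    (cos_pos_of_mem_Ioo ⟨by linarith [hy.1], by linarith [hy.2]⟩).ne'
  refine ((hasDerivAt_tan hcos).comp y ((hasDerivAt_id y).div_const 2)).congr_deriv ?_
  rw [← inv_one_add_tan_sq hcos]
  field_simp

lemma tan_half_nonneg {y : ℝ} (hy : y ∈ Ico 0 π) : 0 ≤ tan (y / 2) :=
  tan_nonneg_of_nonneg_of_le_pi_div_two (by linarith [hy.1]) (by linarith [hy.2])

lemma monotoneOn_tan_half : MonotoneOn (fun y => tan (y / 2)) (Ico 0 π) :=
  fun x hx y hy hxy => strictMonoOn_tan.monotoneOn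
    ⟨by linarith [hx.1, pi_pos], by linarith [hx.2]⟩
    ⟨by linarith [hy.1, pi_pos], by linarith [hy.2]⟩ (by linarith)

lemma measurable_tan_half : Measurable fun y => tan (y / 2) := by
  simp only [tan_eq_sin_div_cos]
  fun_prop

/-- The integral of `tan²` over `(-m / 2, m / 2)`: the least mass that `ψ²` can give to a set of
length `m`. -/
def tanSqMass (m : ℝ) : ℝ := 2 * tan (m / 2) - m

lemma measurable_tanSqMass : Measurable tanSqMass :=
  (measurable_tan_half.const_mul 2).sub measurable_id

lemma hasDerivAt_tanSqMass {y : ℝ} (hy : y ∈ Ioo (-π) π) :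
    HasDerivAt tanSqMass (tan (y / 2) ^ 2) y :=
  (((hasDerivAt_tan_half hy).const_mul 2).sub (hasDerivAt_id y)).congr_deriv (by ring)

lemma tanSqMass_nonneg {m : ℝ} (hm : m ∈ Ico 0 π) : 0 ≤ tanSqMass m := by
  have := le_tan (x := m / 2) (by linarith [hm.1]) (by linarith [hm.2])
  rw [tanSqMass]
  linarith

lemma lintegral_two_mul_tan_half_sq {m : ℝ} (hm : m ∈ Ico 0 π) :
    ∫⁻ y in Ioo 0 m, ENNReal.ofReal ((2 * tan (y / 2)) ^ 2) =
      2 * ENNReal.ofReal (2 * tanSqMass m) := by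
  have hderiv : ∀ y ∈ Icc 0 m, HasDerivAt (fun y => 4 * tanSqMass y) ((2 * tan (y / 2)) ^ 2) y :=
    fun y hy => ((hasDerivAt_tanSqMass ⟨by linarith [hy.1, pi_pos],
      hy.2.trans_lt hm.2⟩).const_mul 4).congr_deriv (by ring)
  rw [lintegral_ofReal_eq_sub_of_hasDerivAt hm.1
    (fun y hy => (hderiv y hy).continuousAt.continuousWithinAt)
    (fun y hy => hderiv y (Ioo_subset_Icc_self hy)) fun y _ => sq_nonneg _,
    ← ENNReal.ofReal_ofNat, ← ENNReal.ofReal_mul zero_le_two]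
  congr 1
  simp [tanSqMass]
  ring

/-- A perturbation of the optimal weight `2 tan (y / 2)` of the comparison argument, for which the
Riccati inequality `perturbedTan_sq_add_le` has some room. -/
def perturbedTan (ε y : ℝ) : ℝ := 2 * tan (y / 2) + ε * y * (1 + tan (y / 2) ^ 2) ^ 2

/-- The derivative of `perturbedTan ε`. -/
def perturbedTanDeriv (ε y : ℝ) : ℝ :=
  1 + tan (y / 2) ^ 2 + ε * (1 + tan (y / 2) ^ 2) ^ 2 * (1 + 2 * y * tan (y / 2))

@[simp] lemma perturbedTan_zero (ε : ℝ) : perturbedTan ε 0 = 0 := by simp [perturbedTan]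

lemma measurable_perturbedTan (ε : ℝ) : Measurable (perturbedTan ε) :=
  (measurable_tan_half.const_mul 2).add
    ((measurable_id.const_mul ε).mul (((measurable_tan_half.pow_const 2).const_add 1).pow_const 2))

lemma hasDerivAt_perturbedTan (ε : ℝ) {y : ℝ} (hy : y ∈ Ioo (-π) π) :
    HasDerivAt (perturbedTan ε) (perturbedTanDeriv ε y) y := by
  have ht := hasDerivAt_tan_half hy
  refine ((ht.const_mul 2).add
    (((hasDerivAt_id y).const_mul ε).mul (((ht.pow 2).const_add 1).pow 2))).congr_deriv ?_
  simp [perturbedTanDeriv]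
  ring

lemma monotoneOn_perturbedTan {ε : ℝ} (hε : 0 ≤ ε) : MonotoneOn (perturbedTan ε) (Ico 0 π) := by
  intro x hx y hy hxy
  have htx := tan_half_nonneg hx
  have hty := monotoneOn_tan_half hx hy hxy
  have hy0 := hy.1
  simp only [perturbedTan]
  gcongr

lemma perturbedTan_nonneg {ε y : ℝ} (hε : 0 ≤ ε) (hy : y ∈ Ico 0 π) : 0 ≤ perturbedTan ε y :=
  perturbedTan_zero ε ▸ monotoneOn_perturbedTan hε ⟨le_rfl, pi_pos⟩ hy hy.1

lemma perturbedTan_sq_add_le {ε y : ℝ} (hε : 0 ≤ ε)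
    (hεy : ε * y ^ 2 * (1 + tan (y / 2) ^ 2) ^ 2 ≤ 1) :
    perturbedTan ε y ^ 2 + (2 + ε) ≤ 2 * perturbedTanDeriv ε y + 2 * tan (y / 2) ^ 2 := by
  set S := (1 + tan (y / 2) ^ 2) ^ 2 with hS
  have hS1 : 1 ≤ S := one_le_pow₀ (le_add_of_nonneg_right (sq_nonneg _))
  have hlow : ε * 1 ≤ ε * S := by gcongr
  have hsq : ε * S * (ε * y ^ 2 * S) ≤ ε * S * 1 := by gcongr
  simp only [perturbedTan, perturbedTanDeriv, ← hS]
  linarith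

lemma ofReal_add_lintegral_perturbedTan_sq_le {ε m : ℝ} (hε : 0 ≤ ε) (hm : m ∈ Ico 0 π)
    (hεm : ε * m ^ 2 * (1 + tan (m / 2) ^ 2) ^ 2 ≤ 1) :
    ENNReal.ofReal (2 + ε) * ENNReal.ofReal m +
        ∫⁻ y in Ioo 0 m, ENNReal.ofReal (perturbedTan ε y ^ 2) ≤
      ENNReal.ofReal (2 * perturbedTan ε m) + ENNReal.ofReal (2 * tanSqMass m) := by
  have hmem : ∀ y ∈ Icc 0 m, y ∈ Ico 0 π := fun y hy => ⟨hy.1, hy.2.trans_lt hm.2⟩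
  have hriccati : ∀ y ∈ Icc 0 m, 2 + ε + perturbedTan ε y ^ 2 ≤
      2 * perturbedTanDeriv ε y + 2 * tan (y / 2) ^ 2 := fun y hy => by
    have hty := tan_half_nonneg (hmem y hy)
    have htm := monotoneOn_tan_half (hmem y hy) hm hy.2
    rw [add_comm]
    refine perturbedTan_sq_add_le hε (le_trans ?_ hεm)
    have hy0 := hy.1
    have hym := hy.2
    gcongr
  have hderiv : ∀ y ∈ Icc 0 m, HasDerivAt (fun y => 2 * perturbedTan ε y + 2 * tanSqMass y)
      (2 * perturbedTanDeriv ε y + 2 * tan (y / 2) ^ 2) y := fun y hy => by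
    have hyI : y ∈ Ioo (-π) π := ⟨by linarith [hy.1, pi_pos], (hmem y hy).2⟩
    exact ((hasDerivAt_perturbedTan ε hyI).const_mul 2).add
      ((hasDerivAt_tanSqMass hyI).const_mul 2)
  have hsq : ∀ y, 0 ≤ 2 + ε + perturbedTan ε y ^ 2 := fun y => by positivity
  calc ENNReal.ofReal (2 + ε) * ENNReal.ofReal m +
        ∫⁻ y in Ioo 0 m, ENNReal.ofReal (perturbedTan ε y ^ 2)
      = ∫⁻ y in Ioo 0 m, ENNReal.ofReal (2 + ε + perturbedTan ε y ^ 2) := by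
        simp_rw [ENNReal.ofReal_add (by positivity : 0 ≤ 2 + ε) (sq_nonneg _)]
        rw [lintegral_add_left measurable_const, setLIntegral_const, Real.volume_Ioo, sub_zero]
    _ ≤ ∫⁻ y in Ioo 0 m, ENNReal.ofReal (2 * perturbedTanDeriv ε y + 2 * tan (y / 2) ^ 2) :=
        setLIntegral_mono' measurableSet_Ioo fun y hy =>
          ENNReal.ofReal_le_ofReal (hriccati y (Ioo_subset_Icc_self hy))
    _ = ENNReal.ofReal (2 * perturbedTan ε m + 2 * tanSqMass m) := by
        rw [lintegral_ofReal_eq_sub_of_hasDerivAt hm.1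
          (fun y hy => (hderiv y hy).continuousAt.continuousWithinAt)
          (fun y hy => hderiv y (Ioo_subset_Icc_self hy))
          fun y hy => (hsq y).trans (hriccati y (Ioo_subset_Icc_self hy))]
        simp [tanSqMass]
    _ ≤ _ := ENNReal.ofReal_add_le

namespace TestFun

variable {v : ℝ → ℝ}

lemma two_mul_lintegral_sq_le (hv : TestFun (-(π / 2)) (π / 2) v) :
    2 * ∫⁻ x in Ioo (-(π / 2)) (π / 2), ENNReal.ofReal (v x ^ 2) ≤
      (∫⁻ x in Ioo (-(π / 2)) (π / 2), ENNReal.ofReal (deriv v x ^ 2)) +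
        layerIntegral (-(π / 2)) (π / 2) v fun m => ENNReal.ofReal (2 * tanSqMass m) := by
  have hab : -(π / 2) < π / 2 := by linarith [pi_pos]
  have hlen : π / 2 - -(π / 2) = π := by ring
  rcases eq_or_ne (layerIntegral (-(π / 2)) (π / 2) v fun m => ENNReal.ofReal (2 * tanSqMass m)) ∞
    with htop | hfin
  · rw [htop, add_top]
    exact le_top
  rw [hv.lintegral_sq_eq_layerIntegral, ← layerIntegral_const_mul _ _ _ _ ENNReal.measurable_ofReal]
  refine hv.layerIntegral_le_add_of_le hab (measurable_tan_half.const_mul 2)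
    (fun x hx y hy hxy => ?_) (by simp) (fun m hm => ?_) ?_
  · rw [hlen] at hx hy
    exact mul_le_mul_of_nonneg_left (monotoneOn_tan_half hx hy hxy) zero_le_two
  · rw [hlen] at hm
    have hm0 := hm.1
    have ht0 := tan_half_nonneg hm
    have hΦ0 := tanSqMass_nonneg hm
    rw [lintegral_two_mul_tan_half_sq hm, ← ENNReal.ofReal_ofNat,
      ← ENNReal.ofReal_mul zero_le_two, ← ENNReal.ofReal_mul zero_le_two,
      ← ENNReal.ofReal_add (by positivity) (by positivity),
      ← ENNReal.ofReal_add (by positivity) (by positivity)]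
    refine ENNReal.ofReal_le_ofReal (le_of_eq ?_)
    rw [tanSqMass]
    ring
  · refine ne_top_of_le_ne_top (ENNReal.mul_ne_top ENNReal.ofNat_ne_top hfin)
      ((hv.layerIntegral_mono hab fun m hm => ?_).trans_eq
        (layerIntegral_const_mul _ _ _ 2 (measurable_tanSqMass.const_mul 2).ennreal_ofReal))
    exact (lintegral_two_mul_tan_half_sq (hlen ▸ hm)).le

end TestFun

/-- The perturbed weight frozen beyond `m₀`, which keeps it bounded. -/
def truncPerturbedTan (ε m₀ y : ℝ) : ℝ := perturbedTan ε (min y m₀)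

lemma measurable_truncPerturbedTan (ε m₀ : ℝ) : Measurable (truncPerturbedTan ε m₀) :=
  (measurable_perturbedTan ε).comp (measurable_id.min measurable_const)

lemma monotoneOn_truncPerturbedTan {ε m₀ : ℝ} (hε : 0 ≤ ε) (hm₀ : m₀ ∈ Ico 0 π) :
    MonotoneOn (truncPerturbedTan ε m₀) (Ici 0) := fun _ hx _ hy hxy =>
  monotoneOn_perturbedTan hε ⟨le_min hx hm₀.1, min_lt_of_right_lt hm₀.2⟩
    ⟨le_min hy hm₀.1, min_lt_of_right_lt hm₀.2⟩ (min_le_min_right m₀ hxy)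

lemma lintegral_truncPerturbedTan_sq_le {ε m₀ : ℝ} (hε : 0 ≤ ε) (hm₀ : m₀ ∈ Ico 0 π) (m : ℝ) :
    ∫⁻ y in Ioo 0 m, ENNReal.ofReal (truncPerturbedTan ε m₀ y ^ 2) ≤
      ENNReal.ofReal (perturbedTan ε m₀ ^ 2) * ENNReal.ofReal m := by
  calc ∫⁻ y in Ioo 0 m, ENNReal.ofReal (truncPerturbedTan ε m₀ y ^ 2)
      ≤ ∫⁻ _ in Ioo 0 m, ENNReal.ofReal (perturbedTan ε m₀ ^ 2) :=
        setLIntegral_mono' measurableSet_Ioo fun y hy => by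
          have hmin : min y m₀ ∈ Ico 0 π := ⟨le_min hy.1.le hm₀.1, min_lt_of_right_lt hm₀.2⟩
          exact ENNReal.ofReal_le_ofReal (pow_le_pow_left₀ (perturbedTan_nonneg hε hmin)
            (monotoneOn_perturbedTan hε hmin hm₀ (min_le_right _ _)) 2)
    _ = _ := by rw [setLIntegral_const, Real.volume_Ioo, sub_zero]

lemma ofReal_add_lintegral_truncPerturbedTan_sq_le {ε m₀ m : ℝ} (hε : 0 ≤ ε) (hm₀ : m₀ ∈ Ico 0 π)
    (hεm₀ : ε * m₀ ^ 2 * (1 + tan (m₀ / 2) ^ 2) ^ 2 ≤ 1) (hm : m ∈ Ico 0 π) :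
    ENNReal.ofReal (2 + ε) * ENNReal.ofReal m +
        ∫⁻ y in Ioo 0 m, ENNReal.ofReal (truncPerturbedTan ε m₀ y ^ 2) ≤
      ENNReal.ofReal (2 * truncPerturbedTan ε m₀ m) + (ENNReal.ofReal (2 * tanSqMass m) +
        (ENNReal.ofReal (2 + ε) + ENNReal.ofReal (perturbedTan ε m₀ ^ 2)) * ENNReal.ofReal π *
          (Ici m₀).indicator 1 m) := by
  rcases lt_or_ge m m₀ with hlt | hge
  · have hm0 := hm.1
    have htm := tan_half_nonneg hm
    have htm₀ := monotoneOn_tan_half hm hm₀ hlt.le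
    have hεm : ε * m ^ 2 * (1 + tan (m / 2) ^ 2) ^ 2 ≤ 1 := le_trans (by gcongr) hεm₀
    rw [setLIntegral_congr_fun (g := fun y => ENNReal.ofReal (perturbedTan ε y ^ 2))
        measurableSet_Ioo fun y hy => by rw [truncPerturbedTan, min_eq_left (hy.2.trans hlt).le],
      truncPerturbedTan, min_eq_left hlt.le, indicator_of_notMem (notMem_Ici.2 hlt), mul_zero,
      add_zero]
    exact ofReal_add_lintegral_perturbedTan_sq_le hε hm hεm
  · rw [indicator_of_mem (mem_Ici.2 hge), Pi.one_apply, mul_one]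
    calc ENNReal.ofReal (2 + ε) * ENNReal.ofReal m +
          ∫⁻ y in Ioo 0 m, ENNReal.ofReal (truncPerturbedTan ε m₀ y ^ 2)
        ≤ ENNReal.ofReal (2 + ε) * ENNReal.ofReal m +
          ENNReal.ofReal (perturbedTan ε m₀ ^ 2) * ENNReal.ofReal m := by
          gcongr
          exact lintegral_truncPerturbedTan_sq_le hε hm₀ m
      _ ≤ (ENNReal.ofReal (2 + ε) + ENNReal.ofReal (perturbedTan ε m₀ ^ 2)) *
          ENNReal.ofReal π := by
          rw [← add_mul]
          gcongr
          exact hm.2.le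
      _ ≤ _ := le_add_self.trans le_add_self

namespace TestFun

variable {v : ℝ → ℝ}

lemma two_add_mul_lintegral_sq_le (hv : TestFun (-(π / 2)) (π / 2) v) {ε m₀ : ℝ} (hε : 0 ≤ ε)
    (hm₀ : m₀ ∈ Ico 0 π) (hεm₀ : ε * m₀ ^ 2 * (1 + tan (m₀ / 2) ^ 2) ^ 2 ≤ 1) :
    ENNReal.ofReal (2 + ε) * ∫⁻ x in Ioo (-(π / 2)) (π / 2), ENNReal.ofReal (v x ^ 2) ≤
      (∫⁻ x in Ioo (-(π / 2)) (π / 2), ENNReal.ofReal (deriv v x ^ 2)) +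
        ((layerIntegral (-(π / 2)) (π / 2) v fun m => ENNReal.ofReal (2 * tanSqMass m)) +
          (ENNReal.ofReal (2 + ε) + ENNReal.ofReal (perturbedTan ε m₀ ^ 2)) * ENNReal.ofReal π *
            layerIntegral (-(π / 2)) (π / 2) v ((Ici m₀).indicator 1)) := by
  have hab : -(π / 2) < π / 2 := by linarith [pi_pos]
  have hlen : π / 2 - -(π / 2) = π := by ring
  rw [hv.lintegral_sq_eq_layerIntegral, ← layerIntegral_const_mul _ _ _ _ ENNReal.measurable_ofReal,
    ← layerIntegral_const_mul _ _ _ _ (measurable_one.indicator measurableSet_Ici),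
    ← layerIntegral_add _ _ _ (measurable_tanSqMass.const_mul 2).ennreal_ofReal]
  refine hv.layerIntegral_le_add_of_le hab (measurable_truncPerturbedTan ε m₀)
    ((monotoneOn_truncPerturbedTan hε hm₀).mono Ico_subset_Ici_self)
    (by simp [truncPerturbedTan, hm₀.1]) (fun m hm =>
      ofReal_add_lintegral_truncPerturbedTan_sq_le hε hm₀ hεm₀ (hlen ▸ hm)) ?_
  refine ne_top_of_le_ne_top ?_ (hv.layerIntegral_mono hab fun m _ =>
    lintegral_truncPerturbedTan_sq_le hε hm₀ m)
  rw [layerIntegral_const_mul _ _ _ _ ENNReal.measurable_ofReal, ← hv.lintegral_sq_eq_layerIntegral]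
  exact ENNReal.mul_ne_top ENNReal.ofReal_ne_top (hv.lintegral_sq_ne_top hab)

lemma exists_two_add_mul_lintegral_sq_le {m₀ : ℝ} (hm₀ : m₀ ∈ Ioo 0 π) :
    ∃ ε ≠ 0, ∃ C ≠ ∞, ∀ v, TestFun (-(π / 2)) (π / 2) v →
      (2 + ε) * ∫⁻ x in Ioo (-(π / 2)) (π / 2), ENNReal.ofReal (v x ^ 2) ≤
        (∫⁻ x in Ioo (-(π / 2)) (π / 2), ENNReal.ofReal (deriv v x ^ 2)) +
          ((layerIntegral (-(π / 2)) (π / 2) v fun m => ENNReal.ofReal (2 * tanSqMass m)) +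
            C * layerIntegral (-(π / 2)) (π / 2) v ((Ici m₀).indicator 1)) := by
  have hpos : 0 < m₀ ^ 2 * (1 + tan (m₀ / 2) ^ 2) ^ 2 := by
    have := hm₀.1
    positivity
  set ε := (m₀ ^ 2 * (1 + tan (m₀ / 2) ^ 2) ^ 2)⁻¹
  have hεpos : 0 < ε := inv_pos.2 hpos
  refine ⟨ENNReal.ofReal ε, (ENNReal.ofReal_pos.2 hεpos).ne',
    (ENNReal.ofReal (2 + ε) + ENNReal.ofReal (perturbedTan ε m₀ ^ 2)) * ENNReal.ofReal π,
    by finiteness, fun v hv => ?_⟩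
  rw [← ENNReal.ofReal_ofNat, ← ENNReal.ofReal_add zero_le_two hεpos.le]
  refine hv.two_add_mul_lintegral_sq_le hεpos.le (Ioo_subset_Ico_self hm₀) ?_
  rw [mul_assoc, inv_mul_cancel₀ hpos.ne']

end TestFun

/-! ### Sublevel sets of functions in the class `𝒜(I_π)` -/

namespace PsiA

variable (P : PsiA)

/-- The sublevel set `{|ψ| ≤ t}` of `ψ ∈ 𝒜(I_π)`, contained in its finiteness domain. -/
def sublevel (t : ℝ) : Set ℝ := {x ∈ P.dom | |P.psi x| ≤ t}

variable {P}

lemma sublevel_subset (t : ℝ) : P.sublevel t ⊆ P.dom := sep_subset _ _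

lemma sublevel_mono {s t : ℝ} (hst : s ≤ t) : P.sublevel s ⊆ P.sublevel t :=
  fun _ hx => ⟨hx.1, hx.2.trans hst⟩

lemma ordConnected_sublevel (t : ℝ) : (P.sublevel t).OrdConnected :=
  ⟨fun x hx y hy z hz => by
    have hzd : z ∈ P.dom := P.domConn.out hx.1 hy.1 hz
    exact ⟨hzd, abs_le.2 ⟨(abs_le.1 hx.2).1.trans (P.mono hx.1 hzd hz.1),
      (P.mono hzd hy.1 hz.2).trans (abs_le.1 hy.2).2⟩⟩⟩

lemma sub_le_two_mul_arctan {x y t : ℝ} (hx : x ∈ P.dom) (hy : y ∈ P.dom) (ht : 0 ≤ t)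
    (h : P.psi y - P.psi x ≤ 2 * t) : y - x ≤ 2 * arctan t := by
  rcases le_or_gt y x with hyx | hxy
  · linarith [arctan_nonneg.2 ht]
  have htan : tan ((y - x) / 2) ≤ t := by linarith [P.gap hx hy hxy]
  have harctan := arctan_mono htan
  rw [arctan_tan (by linarith [pi_pos]) (by linarith [(P.domSub hx).1, (P.domSub hy).2])]
    at harctan
  linarith

lemma volume_sublevel_le {t : ℝ} (ht : 0 ≤ t) :
    volume (P.sublevel t) ≤ ENNReal.ofReal (2 * arctan t) := by
  have hsub : ∀ x ∈ P.sublevel t, ∀ y ∈ P.sublevel t, y - x ≤ 2 * arctan t := fun x hx y hy =>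
    sub_le_two_mul_arctan hx.1 hy.1 ht (by linarith [(abs_le.1 hx.2).1, (abs_le.1 hy.2).2])
  refine (Real.volume_le_diam _).trans (Metric.ediam_le fun x hx y hy => ?_)
  rw [edist_dist, Real.dist_eq]
  exact ENNReal.ofReal_le_ofReal
    (abs_le.2 ⟨by linarith [hsub x hx y hy], hsub y hy x hx⟩)

lemma setLIntegral_sq_le_sqM {E : Set ℝ} (hE : MeasurableSet E) :
    ∫⁻ x in E ∩ P.dom, ENNReal.ofReal (P.psi x ^ 2) ≤ P.sqM E := by
  rw [sqM, Measure.add_apply, withDensity_apply _ hE, Measure.restrict_restrict hE]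
  exact le_self_add

lemma sqM_eq_top {E : Set ℝ} (hE : MeasurableSet E)
    (h : volume (E ∩ (Ioo (-(π / 2)) (π / 2) \ P.dom)) ≠ 0) : P.sqM E = ∞ := by
  rw [sqM, Measure.add_apply, Measure.smul_apply, smul_eq_mul, Measure.restrict_apply hE,
    ENNReal.top_mul h, add_top]

lemma lintegral_volume_tsub_le_sqM {E : Set ℝ} (hE : MeasurableSet E)
    (hEI : E ⊆ Ioo (-(π / 2)) (π / 2)) :
    ∫⁻ t in Ioi (0 : ℝ), (volume E - volume (P.sublevel t)) * ENNReal.ofReal (2 * t) ≤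
      P.sqM E := by
  rcases ne_or_eq (volume (E ∩ (Ioo (-(π / 2)) (π / 2) \ P.dom))) 0 with hout | hout
  · exact le_top.trans_eq (sqM_eq_top hE hout).symm
  have hdom : MeasurableSet P.dom := P.domConn.measurableSet
  have hpsi : AEMeasurable P.psi (volume.restrict (E ∩ P.dom)) :=
    (aemeasurable_restrict_of_monotoneOn hdom P.mono).mono_measure
      (Measure.restrict_mono_set _ inter_subset_right)
  have hcover : ∀ t, E ⊆ {x | t < |P.psi x|} ∩ (E ∩ P.dom) ∪ P.sublevel t ∪
      E ∩ (Ioo (-(π / 2)) (π / 2) \ P.dom) := fun t x hx => by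
    by_cases hxd : x ∈ P.dom
    · exact Or.inl ((lt_or_ge t |P.psi x|).imp (fun h => ⟨h, hx, hxd⟩) fun h => ⟨hxd, h⟩)
    · exact Or.inr ⟨hx, hEI hx, hxd⟩
  refine le_trans ?_ (setLIntegral_sq_le_sqM hE)
  rw [lintegral_sq_eq_lintegral_meas_lt_abs hpsi]
  gcongr with t
  rw [tsub_le_iff_right, Measure.restrict_apply' (hE.inter hdom)]
  calc volume E ≤ volume ({x | t < |P.psi x|} ∩ (E ∩ P.dom) ∪ P.sublevel t) +
        volume (E ∩ (Ioo (-(π / 2)) (π / 2) \ P.dom)) :=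
        (measure_mono (hcover t)).trans (measure_union_le _ _)
    _ ≤ _ := by
        rw [hout, add_zero]
        exact measure_union_le _ _

variable (P) in
/-- The part of `∫ ψ²` that is lost up to the height `t₀` when the sublevel sets of `ψ` are
replaced by the longest possible ones, those of `tan`. -/
def deficit (t₀ : ℝ) : ℝ≥0∞ :=
  ∫⁻ t in Ioo 0 t₀,
    (ENNReal.ofReal (2 * arctan t) - volume (P.sublevel t)) * ENNReal.ofReal (2 * t)

end PsiA

lemma lintegral_ofReal_sub_two_mul_arctan {m : ℝ} (hm : m ∈ Ico 0 π) :
    ∫⁻ t in Ioo 0 (tan (m / 2)),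
        (ENNReal.ofReal m - ENNReal.ofReal (2 * arctan t)) * ENNReal.ofReal (2 * t) =
      ENNReal.ofReal (tanSqMass m) := by
  have harctan : arctan (tan (m / 2)) = m / 2 :=
    arctan_tan (by linarith [hm.1, pi_pos]) (by linarith [hm.2])
  have hderiv : ∀ t : ℝ, HasDerivAt
      (fun t => m * t ^ 2 - 2 * ((t ^ 2 + 1) * arctan t - t)) ((m - 2 * arctan t) * (2 * t)) t := by
    intro t
    refine (((hasDerivAt_pow 2 t).const_mul m).sub (((((hasDerivAt_pow 2 t).add_const 1).mul
      (hasDerivAt_arctan t)).sub (hasDerivAt_id t)).const_mul 2)).congr_deriv ?_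
    field_simp
    push_cast
    ring
  have hle : ∀ t ∈ Ioo 0 (tan (m / 2)), 0 ≤ m - 2 * arctan t := fun t ht => by
    linarith [arctan_mono ht.2.le]
  calc ∫⁻ t in Ioo 0 (tan (m / 2)),
        (ENNReal.ofReal m - ENNReal.ofReal (2 * arctan t)) * ENNReal.ofReal (2 * t)
      = ∫⁻ t in Ioo 0 (tan (m / 2)), ENNReal.ofReal ((m - 2 * arctan t) * (2 * t)) :=
        setLIntegral_congr_fun measurableSet_Ioo fun t ht => by
          have h0 : 0 ≤ arctan t := arctan_nonneg.2 ht.1.le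
          rw [← ENNReal.ofReal_sub _ (by positivity), ← ENNReal.ofReal_mul (hle t ht)]
    _ = ENNReal.ofReal (tanSqMass m) := by
        rw [lintegral_ofReal_eq_sub_of_hasDerivAt (tan_half_nonneg hm)
          (fun t _ => (hderiv t).continuousAt.continuousWithinAt) (fun t _ => hderiv t)
          fun t ht => mul_nonneg (hle t ht) (by linarith [ht.1]), harctan, tanSqMass]
        congr 1
        simp
        ring

namespace PsiA

variable {P : PsiA}

lemma ofReal_tanSqMass_add_deficit_le_sqM {E : Set ℝ} (hE : MeasurableSet E)
    (hEI : E ⊆ Ioo (-(π / 2)) (π / 2)) {m t₀ : ℝ} (hm : m ∈ Ico 0 π)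
    (hvol : volume E = ENNReal.ofReal m) (ht₀ : t₀ ≤ tan (m / 2)) :
    ENNReal.ofReal (tanSqMass m) + P.deficit t₀ ≤ P.sqM E := by
  have hmeas : Measurable fun t =>
      (ENNReal.ofReal m - ENNReal.ofReal (2 * arctan t)) * ENNReal.ofReal (2 * t) := by fun_prop
  calc ENNReal.ofReal (tanSqMass m) + P.deficit t₀
      ≤ (∫⁻ t in Ioo 0 (tan (m / 2)),
          (ENNReal.ofReal m - ENNReal.ofReal (2 * arctan t)) * ENNReal.ofReal (2 * t)) +
        P.deficit (tan (m / 2)) := by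
        rw [lintegral_ofReal_sub_two_mul_arctan hm]
        gcongr
        exact lintegral_mono_set (Ioo_subset_Ioo_right ht₀)
    _ = ∫⁻ t in Ioo 0 (tan (m / 2)),
          (volume E - volume (P.sublevel t)) * ENNReal.ofReal (2 * t) := by
        rw [deficit, ← lintegral_add_left hmeas]
        refine setLIntegral_congr_fun measurableSet_Ioo fun t ht => ?_
        have hle : 2 * arctan t ≤ m := by
          have := arctan_mono ht.2.le
          rw [arctan_tan (by linarith [hm.1, pi_pos]) (by linarith [hm.2])] at this
          linarith
        rw [← add_mul, tsub_add_tsub_cancel (ENNReal.ofReal_le_ofReal hle)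
          (volume_sublevel_le ht.1.le), hvol]
    _ ≤ ∫⁻ t in Ioi (0 : ℝ),
          (volume E - volume (P.sublevel t)) * ENNReal.ofReal (2 * t) :=
        lintegral_mono_set fun t ht => ht.1
    _ ≤ P.sqM E := lintegral_volume_tsub_le_sqM hE hEI

lemma layerIntegral_add_deficit_le {v : ℝ → ℝ} (hv : TestFun (-(π / 2)) (π / 2) v)
    (t₀ : ℝ) :
    (layerIntegral (-(π / 2)) (π / 2) v fun m => ENNReal.ofReal (2 * tanSqMass m)) +
        2 * P.deficit t₀ *
          layerIntegral (-(π / 2)) (π / 2) v ((Ici (2 * arctan t₀)).indicator 1) ≤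
      ∫⁻ x in Ioo (-(π / 2)) (π / 2), ENNReal.ofReal (v x ^ 2) ∂((2 : ℝ≥0∞) • P.sqM) := by
  rw [← layerIntegral_const_mul _ _ _ _ (measurable_one.indicator measurableSet_Ici),
    ← layerIntegral_add _ _ _ (measurable_tanSqMass.const_mul 2).ennreal_ofReal]
  refine hv.layerIntegral_le_lintegral_sq (by linarith [pi_pos]) fun m hm E hE hEI hvol => ?_
  replace hm : m ∈ Ico 0 π := by rwa [sub_neg_eq_add, add_halves] at hm
  rw [Measure.smul_apply, smul_eq_mul, ENNReal.ofReal_mul zero_le_two, ENNReal.ofReal_ofNat]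
  by_cases hmt : m ∈ Ici (2 * arctan t₀)
  · have hle : t₀ ≤ tan (m / 2) := by
      rw [← tan_arctan t₀]
      exact strictMonoOn_tan.monotoneOn ⟨neg_pi_div_two_lt_arctan _, arctan_lt_pi_div_two _⟩
        ⟨by linarith [hm.1, pi_pos], by linarith [hm.2]⟩ (by linarith [mem_Ici.1 hmt])
    rw [indicator_of_mem hmt, Pi.one_apply, mul_one, ← mul_add]
    gcongr
    exact ofReal_tanSqMass_add_deficit_le_sqM hE hEI hm hvol hle
  · rw [indicator_of_notMem hmt, mul_zero, add_zero]
    gcongr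
    exact le_self_add.trans
      (ofReal_tanSqMass_add_deficit_le_sqM hE hEI hm hvol (tan_half_nonneg hm))

lemma two_mul_lintegral_sq_le {v : ℝ → ℝ} (hv : TestFun (-(π / 2)) (π / 2) v) :
    2 * ∫⁻ x in Ioo (-(π / 2)) (π / 2), ENNReal.ofReal (v x ^ 2) ≤
      (∫⁻ x in Ioo (-(π / 2)) (π / 2), ENNReal.ofReal (deriv v x ^ 2)) +
        ∫⁻ x in Ioo (-(π / 2)) (π / 2), ENNReal.ofReal (v x ^ 2) ∂((2 : ℝ≥0∞) • P.sqM) :=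
  hv.two_mul_lintegral_sq_le.trans
    (add_le_add_right (le_self_add.trans (layerIntegral_add_deficit_le hv 0)) _)

lemma le_volume_sublevel_of_deficit_eq_zero {t₀ : ℝ} (ht₀ : 0 < t₀) (h : P.deficit t₀ = 0) :
    ENNReal.ofReal (2 * arctan t₀) ≤ volume (P.sublevel t₀) := by
  have hlt : ∀ s ∈ Ioo 0 t₀, ENNReal.ofReal (2 * arctan s) ≤ volume (P.sublevel t₀) := by
    intro s hs
    have hle : (ENNReal.ofReal (2 * arctan s) - volume (P.sublevel t₀)) * ENNReal.ofReal (2 * s) *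
        volume (Ioo s t₀) ≤ P.deficit t₀ := by
      rw [← setLIntegral_const]
      refine (setLIntegral_mono' measurableSet_Ioo fun t ht => ?_).trans
        (lintegral_mono_set (Ioo_subset_Ioo_left hs.1.le))
      have hst := ht.1.le
      gcongr
      exact sublevel_mono ht.2.le
    rw [h, nonpos_iff_eq_zero, mul_eq_zero, mul_eq_zero, tsub_eq_zero_iff_le] at hle
    refine (hle.resolve_right ?_).resolve_right ?_
    · simpa using hs.2
    · simpa using hs.1
  have hcont : Continuous fun s => ENNReal.ofReal (2 * arctan s) :=
    ENNReal.continuous_ofReal.comp (by fun_prop)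
  exact le_of_tendsto (hcont.continuousAt.tendsto.mono_left nhdsWithin_le_nhds)
    (eventually_of_mem (Ioo_mem_nhdsLT ht₀) hlt)

end PsiA

lemma exists_gt_mul_le_of_mul_le {a ε C d : ℝ≥0∞} (ha : a ≠ ∞) (hε : ε ≠ 0) (hC : C ≠ ∞)
    (hd : d ≠ 0) :
    ∃ L > a, ∀ N D W X : ℝ≥0∞, a * N ≤ D + W → (a + ε) * N ≤ D + (W + C * X) →
      L * N ≤ D + (W + d * X) := by
  -- Take the convex combination of both inequalities whose weight `θ` satisfies `θ * C ≤ d`.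
  set θ := min 1 (d / (C + 1))
  have hθ : θ ≠ 0 := (lt_min one_pos (ENNReal.div_pos hd (by finiteness))).ne'
  have hθC : θ * C ≤ d :=
    calc θ * C ≤ d / (C + 1) * (C + 1) := mul_le_mul' (min_le_right _ _) le_self_add
      _ = d := ENNReal.div_mul_cancel (by simp) (by finiteness)
  obtain ⟨η, hη⟩ : ∃ η, 1 = θ + η := le_iff_exists_add.1 (min_le_left _ _)
  refine ⟨a + θ * ε, ENNReal.lt_add_right ha (mul_ne_zero hθ hε), fun N D W X h h' => ?_⟩
  calc (a + θ * ε) * N = (a * (θ + η) + θ * ε) * N := by rw [← hη, mul_one]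
    _ = θ * ((a + ε) * N) + η * (a * N) := by ring
    _ ≤ θ * (D + (W + C * X)) + η * (D + W) := by gcongr
    _ = (θ + η) * (D + W) + θ * C * X := by ring
    _ ≤ D + (W + d * X) := by
        rw [← hη, one_mul, add_assoc]
        gcongr

namespace PsiA

variable {P : PsiA}

lemma two_lt_lam1_of_deficit_ne_zero {t₀ : ℝ} (ht₀ : 0 < t₀) (h : P.deficit t₀ ≠ 0) :
    2 < lam1 (-(π / 2)) (π / 2) ((2 : ℝ≥0∞) • P.sqM) := by
  have hm₀ : 2 * arctan t₀ ∈ Ioo 0 π :=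
    ⟨mul_pos two_pos (arctan_pos.2 ht₀), by linarith [arctan_lt_pi_div_two t₀]⟩
  obtain ⟨ε, hε, C, hC, hbound⟩ := TestFun.exists_two_add_mul_lintegral_sq_le hm₀
  obtain ⟨L, hL, hmul⟩ := exists_gt_mul_le_of_mul_le (a := 2) (by finiteness) hε hC
    (mul_ne_zero two_ne_zero h)
  refine hL.trans_le (le_lam1 (by linarith [pi_pos]) fun v hv => ?_)
  exact (hmul _ _ _ _ hv.two_mul_lintegral_sq_le (hbound v hv)).trans
    (add_le_add_right (layerIntegral_add_deficit_le hv t₀) _)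

end PsiA

/-! ### Rigidity -/

lemma eq_of_abs_sub_le_two_mul_midpoint_sub {S : Set ℝ} (hS : IsOpen S) (hconn : IsPreconnected S)
    {f c : ℝ → ℝ} (hf : DifferentiableOn ℝ f S)
    (hc : ∀ s ∈ S, ∀ t ∈ S, |c s - c t| ≤ 2 * f ((s + t) / 2) - f s - f t) {s t : ℝ}
    (hs : s ∈ S) (ht : t ∈ S) : c s = c t := by
  -- The right-hand side of `hc` vanishes to first order at `s = t`, so `c' = 0`.
  have hderiv : ∀ t ∈ S, HasDerivAt c 0 t := by
    intro t ht
    have hft := (hf.differentiableAt (hS.mem_nhds ht)).hasDerivAt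
    have hmid : HasDerivAt (fun s => f ((s + t) / 2)) (deriv f t * (1 / 2)) t :=
      HasDerivAt.comp t (by rwa [add_self_div_two]) (((hasDerivAt_id t).add_const t).div_const 2)
    have hrhs : HasDerivAt (fun s => 2 * f ((s + t) / 2) - f s - f t) 0 t :=
      (((hmid.const_mul 2).sub hft).sub_const (f t)).congr_deriv (by ring)
    rw [hasDerivAt_iff_isLittleO] at hrhs ⊢
    refine (Asymptotics.IsBigO.of_bound 1 ?_).trans_isLittleO hrhs
    filter_upwards [hS.mem_nhds ht] with s hs
    rw [smul_zero, sub_zero, sub_zero, one_mul, norm_eq_abs, norm_eq_abs, add_self_div_two]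
    exact (hc s hs t ht).trans ((le_abs_self _).trans_eq (by congr 1; ring))
  exact hS.is_const_of_deriv_eq_zero hconn
    (fun t ht => (hderiv t ht).differentiableAt.differentiableWithinAt)
    (fun t ht => (hderiv t ht).deriv) hs ht

namespace PsiA

variable (P : PsiA)

lemma sublevel_subset_Ioo (t : ℝ) : P.sublevel t ⊆ Ioo (-(π / 2)) (π / 2) :=
  (sublevel_subset t).trans P.domSub

lemma bddBelow_sublevel (t : ℝ) : BddBelow (P.sublevel t) :=
  bddBelow_Ioo.mono (P.sublevel_subset_Ioo t)

lemma bddAbove_sublevel (t : ℝ) : BddAbove (P.sublevel t) :=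
  bddAbove_Ioo.mono (P.sublevel_subset_Ioo t)

lemma sublevel_subset_Icc (t : ℝ) :
    P.sublevel t ⊆ Icc (sInf (P.sublevel t)) (sSup (P.sublevel t)) :=
  subset_Icc_csInf_csSup (P.bddBelow_sublevel t) (P.bddAbove_sublevel t)

/-- The midpoint of the interval `{|ψ| ≤ t}`. -/
def center (t : ℝ) : ℝ := (sInf (P.sublevel t) + sSup (P.sublevel t)) / 2

/-- Every sublevel set of `ψ` is at least as long as the corresponding one of `tan`. -/
def HasMaximalSublevels : Prop :=
  ∀ t, 0 < t → ENNReal.ofReal (2 * arctan t) ≤ volume (P.sublevel t)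

variable {P}

lemma sSup_sub_sInf_sublevel_le {s t : ℝ} (hs : (P.sublevel s).Nonempty)
    (ht : (P.sublevel t).Nonempty) (hst : 0 ≤ s + t) :
    sSup (P.sublevel s) - sInf (P.sublevel t) ≤ 2 * arctan ((s + t) / 2) := by
  rw [sub_le_comm]
  refine le_csInf ht fun x hx => sub_le_iff_le_add.2 (csSup_le hs fun y hy => ?_)
  linarith [sub_le_two_mul_arctan hx.1 hy.1 (div_nonneg hst zero_le_two)
    (by linarith [(abs_le.1 hx.2).1, (abs_le.1 hy.2).2])]

namespace HasMaximalSublevels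

lemma nonempty (hP : P.HasMaximalSublevels) {t : ℝ} (ht : 0 < t) : (P.sublevel t).Nonempty :=
  nonempty_of_measure_ne_zero
    ((ENNReal.ofReal_pos.2 (mul_pos two_pos (arctan_pos.2 ht))).trans_le (hP t ht)).ne'

lemma sSup_sub_sInf (hP : P.HasMaximalSublevels) {t : ℝ} (ht : 0 < t) :
    sSup (P.sublevel t) - sInf (P.sublevel t) = 2 * arctan t := by
  refine le_antisymm ?_ ?_
  · simpa using sSup_sub_sInf_sublevel_le (hP.nonempty ht) (hP.nonempty ht) (by linarith)
  · have hle := (hP t ht).trans (measure_mono (P.sublevel_subset_Icc t))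
    rw [Real.volume_Icc] at hle
    exact (ENNReal.ofReal_le_ofReal_iff (sub_nonneg.2 (csInf_le_csSup (hP.nonempty ht)
      (P.bddBelow_sublevel t) (P.bddAbove_sublevel t)))).1 hle

lemma abs_center_sub_le (hP : P.HasMaximalSublevels) {s t : ℝ} (hs : 0 < s) (ht : 0 < t) :
    |P.center s - P.center t| ≤ 2 * arctan ((s + t) / 2) - arctan s - arctan t := by
  have hst := sSup_sub_sInf_sublevel_le (hP.nonempty hs) (hP.nonempty ht) (by linarith)
  have hts := sSup_sub_sInf_sublevel_le (hP.nonempty ht) (hP.nonempty hs) (by linarith)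
  rw [add_comm t s] at hts
  have hlen_s := hP.sSup_sub_sInf hs
  have hlen_t := hP.sSup_sub_sInf ht
  simp only [center, abs_le]
  constructor <;> linarith

lemma abs_center_le (hP : P.HasMaximalSublevels) {t : ℝ} (ht : 0 < t) :
    |P.center t| ≤ π / 2 - arctan t := by
  have hinf : -(π / 2) ≤ sInf (P.sublevel t) :=
    le_csInf (hP.nonempty ht) fun x hx => (P.sublevel_subset_Ioo t hx).1.le
  have hsup : sSup (P.sublevel t) ≤ π / 2 :=
    csSup_le (hP.nonempty ht) fun x hx => (P.sublevel_subset_Ioo t hx).2.le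
  have hlen := hP.sSup_sub_sInf ht
  simp only [center, abs_le]
  constructor <;> linarith

lemma center_eq_zero (hP : P.HasMaximalSublevels) {t : ℝ} (ht : 0 < t) : P.center t = 0 := by
  have hlim : Tendsto (fun s => π / 2 - arctan s) atTop (nhds 0) := by
    rw [← sub_self (π / 2)]
    exact tendsto_const_nhds.sub (tendsto_arctan_atTop.mono_right nhdsWithin_le_nhds)
  refine abs_nonpos_iff.1 (ge_of_tendsto hlim ?_)
  filter_upwards [eventually_gt_atTop 0] with s hs
  rw [eq_of_abs_sub_le_two_mul_midpoint_sub isOpen_Ioi isPreconnected_Ioi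
    differentiable_arctan.differentiableOn (fun s hs t ht => hP.abs_center_sub_le hs ht) ht hs]
  exact hP.abs_center_le hs

lemma sInf_sublevel (hP : P.HasMaximalSublevels) {t : ℝ} (ht : 0 < t) :
    sInf (P.sublevel t) = -arctan t := by
  have hc : (sInf (P.sublevel t) + sSup (P.sublevel t)) / 2 = 0 := hP.center_eq_zero ht
  linarith [hP.sSup_sub_sInf ht]

lemma sSup_sublevel (hP : P.HasMaximalSublevels) {t : ℝ} (ht : 0 < t) :
    sSup (P.sublevel t) = arctan t := by
  linarith [hP.sSup_sub_sInf ht, hP.sInf_sublevel ht]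

lemma mem_sublevel_of_abs_tan_lt (hP : P.HasMaximalSublevels) {x t : ℝ}
    (hx : x ∈ Ioo (-(π / 2)) (π / 2)) (h : |tan x| < t) :
    x ∈ P.sublevel t := by
  have ht : 0 < t := (abs_nonneg _).trans_lt h
  obtain ⟨hlow, hupp⟩ := abs_lt.1 h
  replace hlow := arctan_strictMono hlow
  replace hupp := arctan_strictMono hupp
  rw [arctan_tan hx.1 hx.2] at hlow hupp
  rw [arctan_neg, ← hP.sInf_sublevel ht] at hlow
  rw [← hP.sSup_sublevel ht] at hupp
  obtain ⟨y, hy, hyx⟩ := exists_lt_of_csInf_lt (hP.nonempty ht) hlow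
  obtain ⟨z, hz, hxz⟩ := exists_lt_of_lt_csSup (hP.nonempty ht) hupp
  exact (ordConnected_sublevel t).out hy hz ⟨hyx.le, hxz.le⟩

lemma abs_tan_le_of_mem_sublevel (hP : P.HasMaximalSublevels) {x t : ℝ} (ht : 0 < t)
    (hx : x ∈ P.sublevel t) :
    |tan x| ≤ t := by
  have hxI := P.sublevel_subset_Ioo t hx
  obtain ⟨hlow, hupp⟩ := P.sublevel_subset_Icc t hx
  rw [hP.sInf_sublevel ht, ← arctan_neg, ← arctan_tan hxI.1 hxI.2] at hlow
  rw [hP.sSup_sublevel ht, ← arctan_tan hxI.1 hxI.2] at hupp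
  exact abs_le.2 ⟨arctan_le_arctan_iff.1 hlow, arctan_le_arctan_iff.1 hupp⟩

lemma dom_eq (hP : P.HasMaximalSublevels) : P.dom = Ioo (-(π / 2)) (π / 2) :=
  P.domSub.antisymm fun _ hx => (hP.mem_sublevel_of_abs_tan_lt hx (lt_add_one _)).1

lemma abs_psi_eq (hP : P.HasMaximalSublevels) {x : ℝ} (hx : x ∈ P.dom) : |P.psi x| = |tan x| := by
  refine le_antisymm (le_of_forall_gt_imp_ge_of_dense fun t ht =>
    (hP.mem_sublevel_of_abs_tan_lt (P.domSub hx) ht).2) ?_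
  exact le_of_forall_gt_imp_ge_of_dense fun t ht =>
    hP.abs_tan_le_of_mem_sublevel ((abs_nonneg _).trans_lt ht) ⟨hx, ht.le⟩

lemma psi_eq_tan (hP : P.HasMaximalSublevels) {x : ℝ} (hx : x ∈ P.dom) : P.psi x = tan x := by
  have h0 : (0 : ℝ) ∈ P.dom := by
    rw [hP.dom_eq]
    exact ⟨by linarith [pi_pos], by linarith [pi_pos]⟩
  have hpsi0 : P.psi 0 = 0 := by simpa using hP.abs_psi_eq h0
  have habs := hP.abs_psi_eq hx
  rcases le_total 0 x with hx0 | hx0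
  · have hpsi := P.mono h0 hx hx0
    rwa [abs_of_nonneg (hpsi0 ▸ hpsi), abs_of_nonneg
      (tan_nonneg_of_nonneg_of_le_pi_div_two hx0 (P.domSub hx).2.le)] at habs
  · have hpsi := P.mono hx h0 hx0
    rwa [abs_of_nonpos (hpsi0 ▸ hpsi), abs_of_nonpos
      (tan_nonpos_of_nonpos_of_neg_pi_div_two_le hx0 (P.domSub hx).1.le), neg_inj] at habs

end HasMaximalSublevels

lemma hasMaximalSublevels_of_lam1_le_two
    (h : lam1 (-(π / 2)) (π / 2) ((2 : ℝ≥0∞) • P.sqM) ≤ 2) : P.HasMaximalSublevels :=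
  fun _ ht => le_volume_sublevel_of_deficit_eq_zero ht
    (not_not.1 fun hne => (two_lt_lam1_of_deficit_ne_zero ht hne).not_ge h)

end PsiA

/-! ### The eigenfunction `cos²` -/

lemma hasDerivAt_indicator {𝕜 F : Type*} [NontriviallyNormedField 𝕜] [NormedAddCommGroup F]
    [NormedSpace 𝕜 F] {s : Set 𝕜} {f f' : 𝕜 → F} {x : 𝕜} (hf : HasDerivAt f (f' x) x)
    (hf₀ : x ∈ frontier s → f x = 0) (hf'₀ : x ∈ frontier s → f' x = 0) :
    HasDerivAt (s.indicator f) (s.indicator f' x) x := by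
  by_cases hint : x ∈ interior s
  · rw [indicator_of_mem (interior_subset hint)]
    refine hf.congr_of_eventuallyEq ?_
    filter_upwards [mem_interior_iff_mem_nhds.1 hint] with y hy using indicator_of_mem hy f
  by_cases hcl : x ∈ closure s
  · have hx : x ∈ frontier s := ⟨hcl, hint⟩
    rw [hf'₀ hx] at hf
    rw [show s.indicator f' x = 0 from indicator_apply_eq_zero.2 fun _ => hf'₀ hx]
    rw [hasDerivAt_iff_isLittleO] at hf ⊢
    refine Asymptotics.IsBigO.trans_isLittleO (Asymptotics.isBigO_of_le _ fun y => ?_) hf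
    simpa [hf₀ hx, indicator_apply_eq_zero.2 fun _ => hf₀ hx] using norm_indicator_le_norm_self f y
  · rw [indicator_of_notMem fun hx => hcl (subset_closure hx)]
    refine (hasDerivAt_const x (0 : F)).congr_of_eventuallyEq ?_
    filter_upwards [isClosed_closure.isOpen_compl.mem_nhds hcl] with y hy
    exact indicator_of_notMem (fun hys => hy (subset_closure hys)) f

lemma testFun_indicator_Ioo {a b : ℝ} {f f' : ℝ → ℝ} (hf : ∀ x, HasDerivAt f (f' x) x)
    (hcont : Continuous f') (hf₀ : ∀ x ∈ ({a, b} : Set ℝ), f x = 0)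
    (hf'₀ : ∀ x ∈ ({a, b} : Set ℝ), f' x = 0) : TestFun a b ((Ioo a b).indicator f) := by
  have hfrontier : frontier (Ioo a b) ⊆ {a, b} := by
    rcases lt_or_ge a b with hab | hab
    · rw [frontier_Ioo hab]
    · simp [Ioo_eq_empty hab.not_gt]
  have hderiv (x : ℝ) : HasDerivAt ((Ioo a b).indicator f) ((Ioo a b).indicator f' x) x :=
    hasDerivAt_indicator (hf x) (fun hx => hf₀ x (hfrontier hx)) fun hx => hf'₀ x (hfrontier hx)
  refine ⟨contDiff_one_iff_deriv.2 ⟨fun x => (hderiv x).differentiableAt, ?_⟩,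
    fun x hx => indicator_of_notMem hx f⟩
  rw [deriv_eq hderiv]
  exact continuous_indicator (fun x hx => hf'₀ x (hfrontier hx)) hcont.continuousOn

lemma hasDerivAt_cos_sq (x : ℝ) : HasDerivAt (fun y => cos y ^ 2) (-(2 * cos x * sin x)) x :=
  ((hasDerivAt_cos x).pow 2).congr_deriv (by push_cast; ring)

lemma cosSq_eq_indicator : cosSq = (Ioo (-(π / 2)) (π / 2)).indicator fun x => cos x ^ 2 := by
  ext x
  simp [cosSq, indicator]

lemma cosSq_of_mem {x : ℝ} (hx : x ∈ Ioo (-(π / 2)) (π / 2)) : cosSq x = cos x ^ 2 :=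
  if_pos hx

lemma testFun_cosSq : TestFun (-(π / 2)) (π / 2) cosSq := by
  rw [cosSq_eq_indicator]
  refine testFun_indicator_Ioo hasDerivAt_cos_sq (by fun_prop) ?_ ?_ <;> simp

lemma deriv_cosSq {x : ℝ} (hx : x ∈ Ioo (-(π / 2)) (π / 2)) :
    deriv cosSq x = -(2 * cos x * sin x) := by
  refine ((hasDerivAt_cos_sq x).congr_of_eventuallyEq ?_).deriv
  filter_upwards [isOpen_Ioo.mem_nhds hx] with y hy using cosSq_of_mem hy

lemma lintegral_Ioo_ofReal_eq_ofReal_integral {a b : ℝ} (hab : a ≤ b) {f : ℝ → ℝ}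
    (hf : Continuous f) (hf₀ : ∀ x, 0 ≤ f x) :
    ∫⁻ x in Ioo a b, ENNReal.ofReal (f x) = ENNReal.ofReal (∫ x in a..b, f x) := by
  rw [intervalIntegral.integral_of_le hab, integral_Ioc_eq_integral_Ioo,
    ofReal_integral_eq_lintegral_ofReal (hf.integrableOn_Icc.mono_set Ioo_subset_Icc_self)
      (.of_forall hf₀)]

lemma integral_sin_sq_mul_cos_sq_half_period :
    ∫ x in (-(π / 2))..(π / 2), sin x ^ 2 * cos x ^ 2 = π / 8 := by
  have hsin : sin (4 * (π / 2)) = 0 := by rw [show 4 * (π / 2) = 2 * π by ring, sin_two_pi]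
  rw [integral_sin_sq_mul_cos_sq, mul_neg, sin_neg, hsin]
  ring

lemma integral_cos_sq_sq_half_period :
    ∫ x in (-(π / 2))..(π / 2), (cos x ^ 2) ^ 2 = 3 * π / 8 := by
  have hsplit (x : ℝ) : (cos x ^ 2) ^ 2 = cos x ^ 2 - sin x ^ 2 * cos x ^ 2 := by
    rw [sin_sq]
    ring
  simp_rw [hsplit]
  rw [intervalIntegral.integral_sub ((by fun_prop : Continuous _).intervalIntegrable _ _)
    ((by fun_prop : Continuous _).intervalIntegrable _ _),
    integral_sin_sq_mul_cos_sq_half_period, integral_cos_sq, cos_neg, cos_pi_div_two]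
  ring

lemma lintegral_cosSq_sq : ∫⁻ x in Ioo (-(π / 2)) (π / 2), ENNReal.ofReal (cosSq x ^ 2) =
    ENNReal.ofReal (3 * π / 8) := by
  rw [← integral_cos_sq_sq_half_period, ← lintegral_Ioo_ofReal_eq_ofReal_integral
    (by linarith [pi_pos]) (by fun_prop) fun x => by positivity]
  exact setLIntegral_congr_fun measurableSet_Ioo fun x hx => by rw [cosSq_of_mem hx]

lemma lintegral_deriv_cosSq_sq :
    ∫⁻ x in Ioo (-(π / 2)) (π / 2), ENNReal.ofReal (deriv cosSq x ^ 2) =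
      ENNReal.ofReal (4 * (π / 8)) := by
  rw [← integral_sin_sq_mul_cos_sq_half_period, ← intervalIntegral.integral_const_mul,
    ← lintegral_Ioo_ofReal_eq_ofReal_integral (by linarith [pi_pos]) (by fun_prop)
      fun x => by positivity]
  refine setLIntegral_congr_fun measurableSet_Ioo fun x hx => ?_
  rw [deriv_cosSq hx]
  ring_nf

lemma lintegral_cosSq_sq_withDensity_tan_sq :
    ∫⁻ x in Ioo (-(π / 2)) (π / 2), ENNReal.ofReal (cosSq x ^ 2)
        ∂(volume.restrict (Ioo (-(π / 2)) (π / 2))).withDensity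
          (fun x => ENNReal.ofReal (tan x ^ 2)) =
      ENNReal.ofReal (π / 8) := by
  have htan : Measurable fun x : ℝ => ENNReal.ofReal (tan x ^ 2) := by
    simp only [tan_eq_sin_div_cos]
    fun_prop
  have hcosSq : Measurable fun x : ℝ => ENNReal.ofReal (cosSq x ^ 2) :=
    (testFun_cosSq.1.continuous.measurable.pow_const 2).ennreal_ofReal
  rw [restrict_withDensity measurableSet_Ioo, Measure.restrict_restrict measurableSet_Ioo,
    inter_self, lintegral_withDensity_eq_lintegral_mul _ htan hcosSq,
    ← integral_sin_sq_mul_cos_sq_half_period, ← lintegral_Ioo_ofReal_eq_ofReal_integral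
      (by linarith [pi_pos]) (by fun_prop) fun x => by positivity]
  refine setLIntegral_congr_fun measurableSet_Ioo fun x hx => ?_
  have hcos : cos x ≠ 0 := (cos_pos_of_mem_Ioo hx).ne'
  rw [Pi.mul_apply, cosSq_of_mem hx, ← ENNReal.ofReal_mul (sq_nonneg _), tan_eq_sin_div_cos]
  congr 1
  field_simp

lemma PsiA.sqM_eq_of_psi_eq_tan {P : PsiA} (hdom : P.dom = Ioo (-(π / 2)) (π / 2))
    (htan : ∀ x ∈ P.dom, P.psi x = tan x) :
    P.sqM = (volume.restrict (Ioo (-(π / 2)) (π / 2))).withDensity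
      (fun x => ENNReal.ofReal (tan x ^ 2)) := by
  rw [hdom] at htan
  rw [PsiA.sqM, hdom, sdiff_self, Measure.restrict_empty, smul_zero, add_zero]
  refine withDensity_congr_ae ?_
  filter_upwards [ae_restrict_mem measurableSet_Ioo] with x hx
  rw [htan x hx]

lemma PsiA.dirRQ_cosSq {P : PsiA} (hdom : P.dom = Ioo (-(π / 2)) (π / 2))
    (htan : ∀ x ∈ P.dom, P.psi x = tan x) :
    dirRQ (-(π / 2)) (π / 2) ((2 : ℝ≥0∞) • P.sqM) cosSq = 2 := by
  rw [dirRQ, lintegral_cosSq_sq, lintegral_deriv_cosSq_sq, Measure.restrict_smul,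
    lintegral_smul_measure, PsiA.sqM_eq_of_psi_eq_tan hdom htan,
    lintegral_cosSq_sq_withDensity_tan_sq, smul_eq_mul, ← ENNReal.ofReal_ofNat (n := 2),
    ← ENNReal.ofReal_mul zero_le_two, ← ENNReal.ofReal_add (by positivity) (by positivity),
    ← ENNReal.ofReal_div_of_pos (by positivity)]
  congr 1
  field_simp
  norm_num

/-- Proposition 2.3 / `p:prima`: for every `ψ ∈ 𝒜(I_π)` it holds
`λ₁(I_π, 2ψ²) ≥ 2`, with equality if and only if `ψ(x) = tan x` (so that `dom ψ = I_π`);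
in the equality case an eigenfunction is `cos² x`. -/
theorem lower_bound_two_psi_sq (P : PsiA) :
    2 ≤ lam1 (-(π / 2)) (π / 2) ((2 : ℝ≥0∞) • P.sqM) ∧
    (lam1 (-(π / 2)) (π / 2) ((2 : ℝ≥0∞) • P.sqM) = 2 ↔
      (P.dom = Ioo (-(π / 2)) (π / 2) ∧ ∀ x ∈ P.dom, P.psi x = tan x)) ∧
    ((P.dom = Ioo (-(π / 2)) (π / 2) ∧ ∀ x ∈ P.dom, P.psi x = tan x) →
      dirRQ (-(π / 2)) (π / 2) ((2 : ℝ≥0∞) • P.sqM) cosSq = 2) := by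
  have lower_bound : 2 ≤ lam1 (-(π / 2)) (π / 2) ((2 : ℝ≥0∞) • P.sqM) :=
    le_lam1 (by linarith [pi_pos]) fun v hv => PsiA.two_mul_lintegral_sq_le hv
  have cosSq_admissible : TestFun (-(π / 2)) (π / 2) cosSq ∧
      ∫⁻ x in Ioo (-(π / 2)) (π / 2), ENNReal.ofReal (cosSq x ^ 2) ≠ 0 :=
    ⟨testFun_cosSq, by simp [lintegral_cosSq_sq, pi_pos]⟩
  refine ⟨lower_bound, ⟨fun heq => ?_, fun ⟨hdom, htan⟩ => ?_⟩,
    fun ⟨hdom, htan⟩ => PsiA.dirRQ_cosSq hdom htan⟩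
  · have hmax := PsiA.hasMaximalSublevels_of_lam1_le_two heq.le
    exact ⟨hmax.dom_eq, fun x hx => hmax.psi_eq_tan hx⟩
  · exact le_antisymm
      (iInf₂_le_of_le cosSq cosSq_admissible (PsiA.dirRQ_cosSq hdom htan).le) lower_bound
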